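/- arXiv:1506.01022 — 5 statements merged into one kernel-verified Lean document; each statement's English description precedes it below -/
import Mathlib

section
/- Let M be a torsion-free FI-module generated in degree ≤ k, and let V ⊆ M be a sub-FI-module generated in degree ≤ d. Then for all n > min(k,d) + d and every a with a ≤ n, regarding M_{[n]−{i}} and V_{[n]−{i}} as subgroups of M_n via the inclusions [n]−{i} ⊆ [n], one has V_n ∩ (M_{[n]−{1}} + ⋯ + M_{[n]−{a}}) = V_{[n]−{1}} + ⋯ + V_{[n]−{a}}. -/
/-!
An invariance-and-difference argument. All the groups `M_T` involved sit inside `M_Ω` for one large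
finite set `Ω`, because `M` is torsion-free; there the symmetric group of `Ω` acts. For `x ∈ T` and
a new point `y`, the operator `1 - (x y)` kills `M_{T \ {x}}`, and the images of the `V_T` under it
form a new family of the same kind, the derivative `DV`, indexed by the sets `T \ {x}`. Taking the
derivative lowers by one both the generation degree of `V` and that of any family containing `V`.

Two properties are proved together by induction through the derivative, for `V` generated in degree
`≤ d` and contained in a family generated in degree `≤ m`.

* `Sat`, for `n > m + d`: if `v ∈ V_n` and `(1 - (x y)) v = 0`, then `v ∈ V_{[n] \ {x}}`.
* `RelTriv`, for `n > m + d + 1`: the relations among the subgroups `V_{[n] \ {z}}` of `V_n` are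
  generated by the identifications of the two copies of each `V_{[n] \ {z, z'}}`.

For `Sat` (`sat_of_relTriv`), write `v = ∑ v_z` with `v_z ∈ V_{[n] \ {z}}`. The relation
`∑ (1 - (x y)) v_z = 0` in `DV_{n-1}` is trivial, so the `v_z` can be chosen with
`(1 - (x y)) v_z = 0` for each `z ≠ x`; then `v_z = (x z) v_z` lies in `V_{[n] \ {x}}`. For `RelTriv`
(`relTriv_of_sat`), adjust the terms of a relation in the same way; by `Sat` in degree `n - 1` each
term with `z ≠ x` lies in `V_{[n] \ {z, x}}` and can be moved to the index `x`.

The statement for `a` points follows by induction on `a` (`sat_multi`). The number `min k d` appears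
because the family containing `V` may be taken to be either `M` or `V` itself.
-/

/-- An FI-module: a functor from the category of finite sets (modeled as finite
subsets of `ℤ`) and injections to abelian groups. -/
structure FIModule where
  obj : Finset ℤ → Type
  [grp : ∀ T, AddCommGroup (obj T)]
  map : ∀ {S T : Finset ℤ}, (↥S ↪ ↥T) → (obj S →+ obj T)
  map_id : ∀ T : Finset ℤ, map (Function.Embedding.refl ↥T) = AddMonoidHom.id (obj T)
  map_comp : ∀ {S T U : Finset ℤ} (f : ↥S ↪ ↥T) (g : ↥T ↪ ↥U),
    map (f.trans g) = (map g).comp (map f)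

attribute [instance] FIModule.grp

/-- The embedding of coercions induced by an inclusion of finite sets. -/
def inclEmb {S T : Finset ℤ} (h : S ⊆ T) : ↥S ↪ ↥T :=
  ⟨fun x => ⟨x.1, h x.2⟩, fun a b hab => Subtype.ext (by simpa using congrArg Subtype.val hab)⟩

/-- An FI-module is torsion-free if all induced maps are injective. -/
def FIModule.TorsionFree (M : FIModule) : Prop :=
  ∀ {S T : Finset ℤ} (f : ↥S ↪ ↥T), Function.Injective (M.map f)

/-- An FI-module is generated in degree ≤ m if every `V_T` is spanned by the images
of the `V_S` with `|S| ≤ m`. -/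
def FIModule.GenLE (V : FIModule) (m : ℕ) : Prop :=
  ∀ T : Finset ℤ, ∀ x : V.obj T,
    x ∈ AddSubgroup.closure {y : V.obj T |
      ∃ (S : Finset ℤ) (f : ↥S ↪ ↥T) (v : V.obj S), S.card ≤ m ∧ y = V.map f v}

/-- A sub-FI-module of `M`: a subgroup of each `M_T`, compatible with all induced maps. -/
structure FIModule.Sub (M : FIModule) where
  sub : ∀ T : Finset ℤ, AddSubgroup (M.obj T)
  map_mem : ∀ {S T : Finset ℤ} (f : ↥S ↪ ↥T) {x : M.obj S}, x ∈ sub S → M.map f x ∈ sub T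

/-- A sub-FI-module is generated in degree ≤ d if each `V_T` is spanned by the images
`f_*(V_S)` with `|S| ≤ d`. -/
def FIModule.Sub.GenLE {M : FIModule} (V : M.Sub) (d : ℕ) : Prop :=
  ∀ T : Finset ℤ, V.sub T ≤ AddSubgroup.closure {y : M.obj T |
    ∃ (S : Finset ℤ) (f : ↥S ↪ ↥T) (v : M.obj S), S.card ≤ d ∧ v ∈ V.sub S ∧ y = M.map f v}

/-! ### Families of subgroups and their derivatives -/

section Core

open Finset Equiv

set_option linter.unusedSectionVars false

variable {X E : Type} [Fintype X] [DecidableEq X] [AddCommGroup E] [DistribMulAction (Perm X) E]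

/-- A family of subgroups `V T ≤ E` indexed by finite sets `T` of points, behaving like the values
of a torsion-free FI-module inside its value `E` on the whole of `X`. The finite set `B` consists of
points that are kept fixed: only the sets `T` disjoint from `B` are meaningful, and only the
permutations fixing `B` pointwise act on the family. -/
structure IsSys (B : Finset X) (V : Finset X → AddSubgroup E) : Prop where
  mono : ∀ {S T : Finset X}, S ⊆ T → V S ≤ V T
  act : ∀ {T : Finset X} (σ : Perm X), Disjoint T B → (∀ b ∈ B, σ b = b) →
    ∀ v ∈ V T, σ • v ∈ V (T.map σ.toEmbedding)
  fix : ∀ {T : Finset X} (σ : Perm X), (∀ b ∈ B, σ b = b) → (∀ t ∈ T, σ t = t) →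
    ∀ v ∈ V T, σ • v = v

/-- The family `V` is generated in degree `< g`. The strict bound lets `g = 0` mean `V = 0`. -/
def GenLT (B : Finset X) (g : ℕ) (V : Finset X → AddSubgroup E) : Prop :=
  ∀ T : Finset X, Disjoint T B → V T ≤ ⨆ S ∈ T.powerset.filter (fun S => S.card < g), V S

/-- The difference operator `1 - (x y)` on `E`. -/
def dOp (E : Type) [AddCommGroup E] [DistribMulAction (Perm X) E] (x y : X) : E →+ E :=
  AddMonoidHom.id E - DistribSMul.toAddMonoidHom E (swap x y)

theorem dOp_apply (x y : X) (v : E) : dOp E x y v = v - swap x y • v := rfl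

/-- The derivative of the family `V`: on `T` it is the image of `V (T ∪ {x})` under `1 - (x y)`. It
is a system relative to `B ∪ {x, y}`. -/
def diffFam (x y : X) (V : Finset X → AddSubgroup E) (T : Finset X) : AddSubgroup E :=
  (V (insert x T)).map (dOp E x y)

/-- Both `x` and `y` lie outside `T`, so `(x y)` acts trivially on `V T`. -/
theorem dOp_eq_zero {B T : Finset X} {V : Finset X → AddSubgroup E} (hV : IsSys B V) {x y : X}
    (hx : x ∉ B) (hy : y ∉ B) (hxT : x ∉ T) (hyT : y ∉ T) {v : E} (hv : v ∈ V T) :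
    dOp E x y v = 0 := by
  rw [dOp_apply, sub_eq_zero]
  refine (hV.fix _ ?_ ?_ v hv).symm
  · intro b hb
    exact swap_apply_of_ne_of_ne (by rintro rfl; exact hx hb) (by rintro rfl; exact hy hb)
  · intro b hb
    exact swap_apply_of_ne_of_ne (by rintro rfl; exact hxT hb) (by rintro rfl; exact hyT hb)

theorem IsSys.deriv {B : Finset X} {V : Finset X → AddSubgroup E} (hV : IsSys B V) {x y : X}
    (hx : x ∉ B) : IsSys (insert x (insert y B)) (diffFam x y V) where
  mono h := AddSubgroup.map_mono (hV.mono (insert_subset_insert _ h))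
  act := by
    rintro T σ hT hσ _ ⟨v, hv, rfl⟩
    have hσx : σ x = x := hσ x (by simp)
    have hσy : σ y = y := hσ y (by simp)
    refine ⟨σ • v, ?_, ?_⟩
    · have h := hV.act σ (T := insert x T) ?_ (fun b hb => hσ b (by simp [hb])) v hv
      · simpa [map_insert, hσx] using h
      · rw [disjoint_insert_left]
        exact ⟨hx, hT.mono_right (fun b hb => by simp [hb])⟩
    · have : swap x y * σ = σ * swap x y := by
        have := Equiv.swap_mul_eq_mul_swap σ x y
        rw [this]
        rw [Perm.inv_eq_iff_eq.2 hσx.symm, Perm.inv_eq_iff_eq.2 hσy.symm]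
      rw [dOp_apply, dOp_apply, smul_sub, ← mul_smul, ← mul_smul, this]
  fix := by
    rintro T σ hσ hT _ ⟨v, hv, rfl⟩
    have hσx : σ x = x := hσ x (by simp)
    have hσy : σ y = y := hσ y (by simp)
    have hv' : σ • v = v := hV.fix σ (fun b hb => hσ b (by simp [hb]))
      (by simpa [hσx] using hT) v hv
    have : swap x y * σ = σ * swap x y := by
      have := Equiv.swap_mul_eq_mul_swap σ x y
      rw [this]
      rw [Perm.inv_eq_iff_eq.2 hσx.symm, Perm.inv_eq_iff_eq.2 hσy.symm]
    rw [dOp_apply, smul_sub, ← mul_smul, ← this, mul_smul, hv']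

/-- Differencing lowers the generation degree by one: a generator supported on a set not containing
`x` is killed by `1 - (x y)`. -/
theorem GenLT.deriv {B : Finset X} {V : Finset X → AddSubgroup E} {g : ℕ} (hg : GenLT B g V)
    (hV : IsSys B V) {x y : X} (hx : x ∉ B) (hy : y ∉ B) (hxy : x ≠ y) :
    GenLT (insert x (insert y B)) (g - 1) (diffFam x y V) := by
  intro T hT
  simp only [disjoint_insert_right] at hT
  obtain ⟨hxT, hyT, hTB⟩ := hT
  refine (AddSubgroup.map_mono (hg (insert x T) (by simp [hx, hTB]))).trans ?_
  simp only [AddSubgroup.map_iSup]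
  refine iSup₂_le fun S hS => ?_
  simp only [mem_filter, mem_powerset] at hS
  by_cases hxS : x ∈ S
  · refine le_iSup₂_of_le (f := fun S _ => diffFam x y V S) (S.erase x) ?_ ?_
    · simp only [mem_filter, mem_powerset]
      refine ⟨by simpa [subset_insert_iff] using hS.1, ?_⟩
      rw [card_erase_of_mem hxS]
      have := card_pos.2 ⟨x, hxS⟩
      omega
    · simp [diffFam, insert_erase hxS]
  · rintro _ ⟨v, hv, rfl⟩
    rw [dOp_eq_zero hV hx hy hxS (fun h => ?_) hv]
    · exact zero_mem _
    · have := hS.1 h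
      simp [hxy.symm, hyT] at this

theorem GenLT.eq_zero {B T : Finset X} {V : Finset X → AddSubgroup E} (hg : GenLT B 0 V)
    (hT : Disjoint T B) {v : E} (hv : v ∈ V T) : v = 0 := by
  have := hg T hT hv
  simpa using this

theorem exists_sum_of_mem_iSup (T : Finset X) (W : X → AddSubgroup E) {v : E}
    (hv : v ∈ ⨆ z ∈ T, W z) : ∃ w : X → E, (∀ z, w z ∈ W z) ∧ ∑ z ∈ T, w z = v := by
  induction T using Finset.induction_on generalizing v with
  | empty => exact ⟨0, fun _ => zero_mem _, by simpa [eq_comm] using hv⟩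
  | insert x T hx ih =>
    rw [Finset.iSup_insert] at hv
    obtain ⟨u, hu, u', hu', rfl⟩ := AddSubgroup.mem_sup.1 hv
    obtain ⟨w, hw, rfl⟩ := ih hu'
    refine ⟨Function.update w x u, fun z => ?_, ?_⟩
    · by_cases h : z = x
      · subst h; simpa using hu
      · simpa [h] using hw z
    · rw [sum_insert hx, Function.update_self]
      congr 1
      exact sum_congr rfl fun z hz => Function.update_of_ne (ne_of_mem_of_not_mem hz hx) _ _

/-- An element generated in degree `< g ≤ |T|` is a sum of elements supported on the sets
`T \ {z}`. -/
theorem GenLT.decomp {B T : Finset X} {V : Finset X → AddSubgroup E} {g : ℕ} (hg : GenLT B g V)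
    (hV : IsSys B V) (hT : Disjoint T B) (hgT : g ≤ T.card) {v : E} (hv : v ∈ V T) :
    ∃ w : X → E, (∀ z, w z ∈ V (T.erase z)) ∧ ∑ z ∈ T, w z = v := by
  have h1 : v ∈ ⨆ z ∈ T, V (T.erase z) := by
    refine (hg T hT).trans ?_ hv
    refine iSup₂_le fun S hS => ?_
    simp only [mem_filter, mem_powerset] at hS
    obtain ⟨z, hzT, hzS⟩ := exists_mem_notMem_of_card_lt_card (hS.2.trans_le hgT)
    exact le_iSup₂_of_le (f := fun z _ => V (T.erase z)) z hzT
      (hV.mono (subset_erase.2 ⟨hS.1, hzS⟩))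
  clear hv
  exact exists_sum_of_mem_iSup T _ h1

/-! ### Saturation and trivial relations -/

/-- The relations among the subgroups `V (T \ {z})` of `V T` are generated by the obvious ones,
which identify the two copies of each `V (T \ {z, z₂})`. -/
def RelTriv (V : Finset X → AddSubgroup E) (T : Finset X) : Prop :=
  ∀ w : X → E, (∀ z ∈ T, w z ∈ V (T.erase z)) → ∑ z ∈ T, w z = 0 →
    ∃ e : X → X → E, (∀ z ∈ T, ∀ z₂ ∈ T, e z z₂ ∈ V ((T.erase z).erase z₂)) ∧
      ∀ z ∈ T, w z = ∑ z₂ ∈ T, (e z z₂ - e z₂ z)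

/-- An element of `V T` invariant under moving `x ∈ T` to a new point `y` already lies in
`V (T \ {x})`. -/
def Sat (B : Finset X) (V : Finset X → AddSubgroup E) (T : Finset X) : Prop :=
  ∀ x ∈ T, ∀ y ∉ T, y ∉ B → ∀ v ∈ V T, dOp E x y v = 0 → v ∈ V (T.erase x)

/-- If the relations in the derivative are trivial, then a family of elements of the `V (T \ {z})`,
`z ≠ x`, whose sum is killed by `1 - (x y)` can be changed by trivial relations so that each member
is killed. -/
theorem adjust {B T : Finset X} {V : Finset X → AddSubgroup E} (hV : IsSys B V)
    {x y : X} (hxT : x ∈ T) (hrel : RelTriv (diffFam x y V) (T.erase x)) (w : X → E)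
    (hw : ∀ z ∈ T.erase x, w z ∈ V (T.erase z))
    (hsum : ∑ z ∈ T.erase x, dOp E x y (w z) = 0) :
    ∃ e : X → X → E,
      (∀ z ∈ T.erase x, ∀ z₂ ∈ T.erase x, e z z₂ ∈ V ((T.erase z).erase z₂)) ∧
      ∀ z ∈ T.erase x, dOp E x y (w z - ∑ z₂ ∈ T.erase x, (e z z₂ - e z₂ z)) = 0 ∧
        w z - ∑ z₂ ∈ T.erase x, (e z z₂ - e z₂ z) ∈ V (T.erase z) := by
  obtain ⟨e, he, hwe⟩ := hrel (fun z => dOp E x y (w z)) (fun z hz => by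
    refine ⟨w z, ?_, rfl⟩
    have h : insert x ((T.erase x).erase z) = T.erase z := by
      rw [erase_right_comm, insert_erase]
      simp only [mem_erase] at hz ⊢
      exact ⟨hz.1.symm, hxT⟩
    rw [h]
    exact hw z hz) hsum
  have hlift : ∀ z z₂, ∃ u : E, z ∈ T.erase x → z₂ ∈ T.erase x →
      u ∈ V ((T.erase z).erase z₂) ∧ dOp E x y u = e z z₂ := by
    intro z z₂
    by_cases hz : z ∈ T.erase x
    · by_cases hz' : z₂ ∈ T.erase x
      · obtain ⟨u, hu, hue⟩ := he z hz z₂ hz'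
        refine ⟨u, fun _ _ => ⟨?_, hue⟩⟩
        have h : insert x (((T.erase x).erase z).erase z₂) = (T.erase z).erase z₂ := by
          rw [erase_right_comm (a := x), erase_right_comm (a := x), insert_erase]
          simp only [mem_erase] at hz hz' ⊢
          exact ⟨hz'.1.symm, hz.1.symm, hxT⟩
        rw [h] at hu
        exact hu
      · exact ⟨0, fun _ h => absurd h hz'⟩
    · exact ⟨0, fun h => absurd h hz⟩
  choose ε hε using hlift
  refine ⟨ε, fun z hz z₂ hz' => (hε z z₂ hz hz').1, fun z hz => ⟨?_, ?_⟩⟩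
  · rw [map_sub, hwe z hz, map_sum, sub_eq_zero]
    refine sum_congr rfl fun z₂ hz' => ?_
    rw [map_sub, (hε z z₂ hz hz').2, (hε z₂ z hz' hz).2]
  · refine sub_mem (hw z hz) (sum_mem fun z₂ hz' => sub_mem ?_ ?_)
    · exact hV.mono (erase_subset _ _) (hε z z₂ hz hz').1
    · have := (hε z₂ z hz' hz).1
      rw [erase_right_comm] at this
      exact hV.mono (erase_subset _ _) this

theorem sum_adjust (T : Finset X) (w : X → E) (e : X → X → E) :
    ∑ z ∈ T, (w z - ∑ z₂ ∈ T, (e z z₂ - e z₂ z)) = ∑ z ∈ T, w z := by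
  simp only [sum_sub_distrib]
  rw [sum_comm (f := fun z z₂ => e z₂ z)]
  simp

/-- Saturation for `V` in degree `n` follows from triviality of relations for the derivative in
degree `n - 1`. -/
theorem sat_of_relTriv {B T : Finset X} {V : Finset X → AddSubgroup E} {g : ℕ} (hV : IsSys B V)
    (hg : GenLT B g V) (hT : Disjoint T B) (hgT : g ≤ T.card)
    (hrel : ∀ x ∈ T, ∀ y ∉ T, y ∉ B → RelTriv (diffFam x y V) (T.erase x)) : Sat B V T := by
  intro x hx y hy hyB v hv hdv
  have hxB : x ∉ B := disjoint_left.1 hT hx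
  obtain ⟨w, hw, hwv⟩ := hg.decomp hV hT hgT hv
  have hwx : dOp E x y (w x) = 0 :=
    dOp_eq_zero hV hxB hyB (notMem_erase x T) (fun h => hy (mem_of_mem_erase h)) (hw x)
  have hsum : ∑ z ∈ T.erase x, dOp E x y (w z) = 0 := by
    rw [← map_sum]
    rw [← add_sum_erase _ _ hx] at hwv
    rw [← hwv, map_add, hwx, zero_add] at hdv
    exact hdv
  obtain ⟨e, -, he⟩ := adjust hV hx (hrel x hx y hy hyB) w (fun z _ => hw z) hsum
  rw [← hwv, ← add_sum_erase _ _ hx, ← sum_adjust (T.erase x) w e]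
  refine add_mem (hw x) (sum_mem fun z hz => ?_)
  obtain ⟨h0, hmem⟩ := he z hz
  set u := w z - ∑ z₂ ∈ T.erase x, (e z z₂ - e z₂ z)
  have hzx : z ≠ x := ne_of_mem_erase hz
  have hzT : z ∈ T := mem_of_mem_erase hz
  have hzB : z ∉ B := disjoint_left.1 hT hzT
  have hxy : x ≠ y := fun h => hy (h ▸ hx)
  have hzy : z ≠ y := fun h => hy (h ▸ hzT)
  -- `u` is fixed by `(x y)` and by `(z y)`, hence by the conjugate `(x z)`, which moves its support
  -- off `x`.
  have h1 : swap x y • u = u := by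
    rw [dOp_apply, sub_eq_zero] at h0
    exact h0.symm
  have h2 : swap z y • u = u := by
    have := dOp_eq_zero hV hzB hyB (notMem_erase z T) (fun h => hy (mem_of_mem_erase h)) hmem
    rw [dOp_apply, sub_eq_zero] at this
    exact this.symm
  have h3 : swap x z • u = u := by
    have : swap x z = swap z y * swap x y * swap z y := by
      rw [swap_comm z y, swap_mul_swap_mul_swap hxy hzx.symm, swap_comm]
    rw [this, mul_smul, mul_smul, h2, h1, h2]
  rw [← h3]
  refine hV.mono ?_ (hV.act (swap x z) (hT.mono_left (erase_subset _ _)) ?_ u hmem)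
  · intro t ht
    simp only [mem_map, mem_erase, coe_toEmbedding] at ht ⊢
    obtain ⟨s, ⟨hs, hsT⟩, rfl⟩ := ht
    by_cases hsx : s = x
    · subst hsx
      simp [hzx, hzT]
    · rw [swap_apply_of_ne_of_ne hsx hs]
      exact ⟨hsx, hsT⟩
  · intro b hb
    exact swap_apply_of_ne_of_ne (by rintro rfl; exact hxB hb) (by rintro rfl; exact hzB hb)

/-- Triviality of relations for `V` in degree `n` follows from saturation for `V` and triviality of
relations for the derivative, both in degree `n - 1`. -/
theorem relTriv_of_sat {B T : Finset X} {V : Finset X → AddSubgroup E} (hV : IsSys B V)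
    (hT : Disjoint T B) {x y : X} (hx : x ∈ T) (hy : y ∉ T) (hyB : y ∉ B)
    (hrel : RelTriv (diffFam x y V) (T.erase x))
    (hsat : ∀ z ∈ T, Sat B V (T.erase z)) : RelTriv V T := by
  intro w hw hsum0
  have hxB : x ∉ B := disjoint_left.1 hT hx
  have hwx : dOp E x y (w x) = 0 :=
    dOp_eq_zero hV hxB hyB (notMem_erase x T) (fun h => hy (mem_of_mem_erase h)) (hw x hx)
  rw [← add_sum_erase _ _ hx] at hsum0
  have hsum : ∑ z ∈ T.erase x, dOp E x y (w z) = 0 := by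
    have := congrArg (dOp E x y) hsum0
    rwa [map_add, hwx, zero_add, map_sum, map_zero] at this
  obtain ⟨e, he, he'⟩ := adjust hV hx hrel w (fun z hz => hw z (mem_of_mem_erase hz)) hsum
  -- Each adjusted element lies in `V (T \ {z, x})`, so a further trivial relation moves it to the
  -- summand indexed by `x`.
  set u : X → E := fun z => w z - ∑ z₂ ∈ T.erase x, (e z z₂ - e z₂ z) with hu
  have hmem : ∀ z ∈ T.erase x, u z ∈ V ((T.erase z).erase x) := fun z hz =>
    hsat z (mem_of_mem_erase hz) x (mem_erase.2 ⟨(ne_of_mem_erase hz).symm, hx⟩) y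
      (fun h => hy (mem_of_mem_erase h)) hyB _ (he' z hz).2 (he' z hz).1
  refine ⟨fun z z₂ => if z = x then 0 else if z₂ = x then u z else e z z₂, ?_, ?_⟩
  · intro z hz z₂ hz'
    dsimp only
    split_ifs with h1 h2
    · exact zero_mem _
    · subst h2
      exact hmem z (mem_erase.2 ⟨h1, hz⟩)
    · exact he z (mem_erase.2 ⟨h1, hz⟩) z₂ (mem_erase.2 ⟨h2, hz'⟩)
  · intro z hz
    rw [← add_sum_erase _ _ hx]
    by_cases hzx : z = x
    · subst hzx
      have : ∀ z₂ ∈ T.erase z, (((if z = z then 0 else if z₂ = z then u z else e z z₂) -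
          (if z₂ = z then 0 else if z = z then u z₂ else e z₂ z)) : E) = - u z₂ := by
        intro z₂ hz'
        simp [ne_of_mem_erase hz']
      rw [sum_congr rfl this, sum_neg_distrib, hu, sum_adjust]
      simpa using eq_neg_of_add_eq_zero_left hsum0
    · have : ∀ z₂ ∈ T.erase x, (((if z = x then 0 else if z₂ = x then u z else e z z₂) -
          (if z₂ = x then 0 else if z = x then u z₂ else e z₂ z)) : E) = e z z₂ - e z₂ z := by
        intro z₂ hz'
        simp [ne_of_mem_erase hz', hzx]
      rw [sum_congr rfl this]
      simp [hzx, hu]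

theorem exists_fresh {T B : Finset X} {p : ℕ} (h : T.card + B.card + (p + 1) ≤ Fintype.card X) :
    ∃ y, y ∉ T ∧ y ∉ B := by
  have : (T ∪ B).card < Fintype.card X := by
    have := card_union_le T B
    omega
  obtain ⟨y, hy⟩ := (T ∪ B).exists_mem_notMem_of_card_lt_card (t := univ) (by simpa using this)
  exact ⟨y, by simpa using hy.2⟩

theorem card_deriv {T B : Finset X} (hT : Disjoint T B) {x y : X} (hx : x ∈ T) (hy : y ∉ T)
    (hyB : y ∉ B) : (T.erase x).card + 1 = T.card ∧
      (insert x (insert y B)).card = B.card + 2 ∧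
      Disjoint (T.erase x) (insert x (insert y B)) := by
  refine ⟨card_erase_add_one hx, ?_, ?_⟩
  · have hxB : x ∉ B := disjoint_left.1 hT hx
    have hxy : x ≠ y := fun h => hy (h ▸ hx)
    rw [card_insert_of_notMem (by simp [hxB, hxy]), card_insert_of_notMem hyB]
  · simp [disjoint_insert_right, hy, hT.mono_left (erase_subset x T)]

/-- For `V` generated in degree `< g` inside `M` generated in degree `< p`, saturation holds in
degrees `≥ g + p - 1` and relations are trivial in degrees `≥ g + p`. The cardinality hypothesis
guarantees enough points of `X` for taking `p` successive derivatives. -/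
theorem sat_and_relTriv (p : ℕ) : ∀ (g : ℕ) (B : Finset X) (V M : Finset X → AddSubgroup E)
    (T : Finset X), IsSys B V → IsSys B M → (∀ S, V S ≤ M S) → GenLT B g V → GenLT B p M →
    Disjoint T B → T.card + B.card + p ≤ Fintype.card X →
    (g + p ≤ T.card + 1 → Sat B V T) ∧ (g + p ≤ T.card → RelTriv V T) := by
  induction p with
  | zero =>
    intro g B V M T hV _ hVM _ hp hT _
    have h0 : ∀ S ⊆ T, ∀ v ∈ V S, v = 0 := fun S hS v hv =>
      hp.eq_zero (hT.mono_left hS) (hVM S hv)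
    constructor
    · intro _ x _ y _ _ v hv _
      rw [h0 T Subset.rfl v hv]
      exact zero_mem _
    · intro _ w hw _
      exact ⟨0, fun _ _ _ _ => zero_mem _, fun z hz => by simp [h0 _ (erase_subset _ _) _ (hw z hz)]⟩
  | succ p ih =>
    intro g B V M T hV hM hVM hg hp hT hX
    rcases Nat.eq_zero_or_pos g with rfl | hgpos
    · have h0 : ∀ S ⊆ T, ∀ v ∈ V S, v = 0 := fun S hS v hv =>
        hg.eq_zero (hT.mono_left hS) hv
      constructor
      · intro _ x _ y _ _ v hv _
        rw [h0 T Subset.rfl v hv]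
        exact zero_mem _
      · intro _ w hw _
        exact ⟨0, fun _ _ _ _ => zero_mem _,
          fun z hz => by simp [h0 _ (erase_subset _ _) _ (hw z hz)]⟩
    have hrel : ∀ S ⊆ T, g + (p + 1) ≤ S.card + 1 → ∀ x ∈ S, ∀ y ∉ S, y ∉ B →
        RelTriv (diffFam x y V) (S.erase x) := by
      intro S hST hS x hx y hy hyB
      have hSB := hT.mono_left hST
      have hxB : x ∉ B := disjoint_left.1 hSB hx
      have hxy : x ≠ y := fun h => hy (h ▸ hx)
      obtain ⟨c1, c2, hdis⟩ := card_deriv hSB hx hy hyB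
      have := card_le_card hST
      refine (ih (g - 1) _ (diffFam x y V) (diffFam x y M) (S.erase x) (hV.deriv hxB) (hM.deriv hxB)
        (fun S => AddSubgroup.map_mono (hVM _)) (hg.deriv hV hxB hyB hxy)
        (by simpa using hp.deriv hM hxB hyB hxy) hdis (by omega)).2 (by omega)
    have hsat : ∀ S ⊆ T, g + (p + 1) ≤ S.card + 1 → Sat B V S := fun S hST hS =>
      sat_of_relTriv hV hg (hT.mono_left hST) (by omega) (hrel S hST hS)
    refine ⟨hsat T Subset.rfl, fun h => ?_⟩
    obtain ⟨x, hx⟩ : T.Nonempty := card_pos.1 (by omega)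
    obtain ⟨y, hy, hyB⟩ := exists_fresh hX
    refine relTriv_of_sat hV hT hx hy hyB (hrel T Subset.rfl (by omega) x hx y hy hyB)
      fun z hz => hsat _ (erase_subset _ _) ?_
    rw [card_erase_add_one hz]
    exact h

/-- The statement for several points follows from saturation at one point by induction on the set
`A` of points: applying `1 - (x y)` with `x ∈ A` reduces `A` to `A \ {x}` in the derivative. The
ambient family `L` need not be the family `M` that controls the range. -/
theorem sat_multi (A : Finset X) : ∀ (g p : ℕ) (B : Finset X) (V M L : Finset X → AddSubgroup E)
    (T : Finset X), IsSys B V → IsSys B M → IsSys B L → (∀ S, V S ≤ M S) →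
    GenLT B g V → GenLT B p M → Disjoint T B → T.card + B.card + p ≤ Fintype.card X →
    g + p ≤ T.card + 1 → A ⊆ T → ∀ v ∈ V T, v ∈ ⨆ i ∈ A, L (T.erase i) →
    v ∈ ⨆ i ∈ A, V (T.erase i) := by
  induction A using Finset.induction_on with
  | empty =>
    intro g p B V M L T _ _ _ _ _ _ _ _ _ _ v _ hv
    simpa using hv
  | insert x A hxA ih =>
    intro g p B V M L T hV hM hL hVM hg hp hT hX hgp hA v hv hvL
    rcases p with _ | p
    · rw [hp.eq_zero hT (hVM T hv)]
      exact zero_mem _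
    obtain ⟨hx, hAT⟩ := insert_subset_iff.1 hA
    obtain ⟨y, hy, hyB⟩ := exists_fresh hX
    have hxB : x ∉ B := disjoint_left.1 hT hx
    have hxy : x ≠ y := fun h => hy (h ▸ hx)
    obtain ⟨c1, c2, hdis⟩ := card_deriv hT hx hy hyB
    have hins : ∀ i ∈ A, insert x ((T.erase x).erase i) = T.erase i := by
      intro i hi
      rw [erase_right_comm, insert_erase (mem_erase.2 ⟨(ne_of_mem_of_not_mem hi hxA).symm, hx⟩)]
    have hmap : ∀ W : Finset X → AddSubgroup E, ⨆ i ∈ A, diffFam x y W ((T.erase x).erase i) =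
        (⨆ i ∈ A, W (T.erase i)).map (dOp E x y) := by
      intro W
      simp only [AddSubgroup.map_iSup]
      refine iSup_congr fun i => iSup_congr fun hi => ?_
      rw [diffFam, hins i hi]
    have key := ih (g - 1) p _ (diffFam x y V) (diffFam x y M) (diffFam x y L) (T.erase x)
      (hV.deriv hxB) (hM.deriv hxB) (hL.deriv hxB) (fun S => AddSubgroup.map_mono (hVM _))
      (hg.deriv hV hxB hyB hxy) (by simpa using hp.deriv hM hxB hyB hxy) hdis (by omega) (by omega)
      (fun i hi => mem_erase.2 ⟨ne_of_mem_of_not_mem hi hxA, hAT hi⟩) (dOp E x y v)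
      ⟨v, by simpa [insert_erase hx] using hv, rfl⟩ ?_
    · rw [hmap] at key
      obtain ⟨v', hv', hvv'⟩ := key
      rw [Finset.iSup_insert]
      have hv'T : v' ∈ V T :=
        (iSup₂_le fun i _ => hV.mono (erase_subset i T) : ⨆ i ∈ A, V (T.erase i) ≤ V T) hv'
      have := (sat_and_relTriv (p + 1) g B V M T hV hM hVM hg hp hT hX).1 hgp x hx y hy hyB
        (v - v') (sub_mem hv hv'T) (by rw [map_sub, hvv', sub_self])
      rw [← sub_add_cancel v v']
      exact add_mem (AddSubgroup.mem_sup_left this) (AddSubgroup.mem_sup_right hv')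
    · rw [hmap]
      rw [Finset.iSup_insert] at hvL
      obtain ⟨m, hm, l, hl, rfl⟩ := AddSubgroup.mem_sup.1 hvL
      rw [map_add, dOp_eq_zero hL hxB hyB (notMem_erase x T)
        (fun h => hy (mem_of_mem_erase h)) hm, zero_add]
      exact ⟨l, hl, rfl⟩

end Core

/-! ### From FI-modules to families of subgroups -/

section Transfer

open Finset Equiv

namespace FIModule

variable {M : FIModule}

/-- The action of the permutations of `Ω` on `M_Ω`. -/
abbrev permAction (M : FIModule) (Ω : Finset ℤ) : DistribMulAction (Perm Ω) (M.obj Ω) where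
  smul := fun σ v => M.map σ.toEmbedding v
  one_smul v := DFunLike.congr_fun (M.map_id Ω) v
  mul_smul σ τ v := DFunLike.congr_fun (M.map_comp τ.toEmbedding σ.toEmbedding) v
  smul_zero _ := map_zero _
  smul_add _ := map_add _

attribute [local instance] permAction

theorem smul_def {Ω : Finset ℤ} (σ : Perm Ω) (v : M.obj Ω) : σ • v = M.map σ.toEmbedding v := rfl

theorem map_map {S T U : Finset ℤ} (f : ↥S ↪ ↥T) (g : ↥T ↪ ↥U) (v : M.obj S) :
    M.map g (M.map f v) = M.map (f.trans g) v := by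
  rw [M.map_comp]; rfl

/-- The subset of `ℤ` underlying a set of points of `Ω`. -/
abbrev under {Ω : Finset ℤ} (T : Finset Ω) : Finset ℤ := T.map (Function.Embedding.subtype _)

theorem under_subset {Ω : Finset ℤ} (T : Finset Ω) : under T ⊆ Ω := by
  intro t ht
  simp only [mem_map, Function.Embedding.subtype_apply] at ht
  obtain ⟨s, _, rfl⟩ := ht
  exact s.2

/-- The image of `V_T` in `M_Ω`, for `T ⊆ Ω`. -/
def Sub.hat (V : M.Sub) (Ω : Finset ℤ) (T : Finset Ω) : AddSubgroup (M.obj Ω) :=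
  (V.sub (under T)).map (M.map (inclEmb (under_subset T)))

theorem Sub.hat_eq (V : M.Sub) {Ω S : Finset ℤ} {T : Finset Ω} (hS : S ⊆ Ω) (h : under T = S) :
    V.hat Ω T = (V.sub S).map (M.map (inclEmb hS)) := by
  subst h
  rfl

/-- Any injection into `Ω` with image in `T` factors through `T`, so it carries `V` into the image of
`V_T`. -/
theorem Sub.map_mem_hat (V : M.Sub) {Ω S : Finset ℤ} {T : Finset Ω} (f : ↥S ↪ ↥Ω)
    (hf : ∀ s, f s ∈ T) {v : M.obj S} (hv : v ∈ V.sub S) : M.map f v ∈ V.hat Ω T := by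
  let f' : ↥S ↪ ↥(under T) := ⟨fun s => ⟨(f s).1, by simp [hf s]⟩, fun a b hab => by
    exact f.injective (Subtype.ext (congrArg (fun t : ↥(under T) => t.1) hab))⟩
  refine ⟨M.map f' v, V.map_mem f' hv, ?_⟩
  rw [map_map]
  rfl

theorem inclEmb_mem {Ω : Finset ℤ} {T : Finset Ω} (s : ↥(under T)) :
    inclEmb (under_subset T) s ∈ T := by
  obtain ⟨s, hs⟩ := s
  simp only [mem_map, Function.Embedding.subtype_apply] at hs
  obtain ⟨t, ht, rfl⟩ := hs
  exact ht

theorem Sub.hat_mono (V : M.Sub) {Ω : Finset ℤ} {S T : Finset Ω} (hST : S ⊆ T) :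
    V.hat Ω S ≤ V.hat Ω T := by
  rintro _ ⟨v, hv, rfl⟩
  exact V.map_mem_hat _ (fun s => hST (inclEmb_mem s)) hv

theorem Sub.hat_act (V : M.Sub) {Ω : Finset ℤ} {T : Finset Ω} (σ : Perm Ω) :
    ∀ v ∈ V.hat Ω T, σ • v ∈ V.hat Ω (T.map σ.toEmbedding) := by
  rintro _ ⟨v, hv, rfl⟩
  rw [smul_def, map_map]
  have h : ∀ s, ((inclEmb (under_subset T)).trans σ.toEmbedding) s ∈ T.map σ.toEmbedding :=
    fun s => mem_map_of_mem σ.toEmbedding (inclEmb_mem s)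
  exact V.map_mem_hat _ h hv

theorem Sub.hat_fix (V : M.Sub) {Ω : Finset ℤ} {T : Finset Ω} (σ : Perm Ω)
    (hT : ∀ t ∈ T, σ t = t) : ∀ v ∈ V.hat Ω T, σ • v = v := by
  rintro _ ⟨v, hv, rfl⟩
  rw [smul_def, map_map]
  have h : (inclEmb (under_subset T)).trans σ.toEmbedding = inclEmb (under_subset T) :=
    Function.Embedding.ext fun s => hT _ (inclEmb_mem s)
  rw [h]

theorem Sub.hat_isSys (V : M.Sub) (Ω : Finset ℤ) : IsSys ∅ (V.hat Ω) where
  mono := V.hat_mono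
  act σ _ _ := V.hat_act σ
  fix σ _ hT := V.hat_fix σ hT

theorem Sub.hat_genLT {V : M.Sub} {d : ℕ} (hd : V.GenLE d) (Ω : Finset ℤ) :
    GenLT ∅ (d + 1) (V.hat Ω) := by
  rintro T - _ ⟨v, hv, rfl⟩
  have hv' := hd _ hv
  rw [← AddSubgroup.mem_comap]
  refine (AddSubgroup.closure_le _).2 ?_ hv'
  rintro _ ⟨S, f, u, hS, hu, rfl⟩
  rw [SetLike.mem_coe, AddSubgroup.mem_comap, map_map]
  set h := f.trans (inclEmb (under_subset T))
  refine AddSubgroup.mem_iSup_of_mem (univ.map h) (AddSubgroup.mem_iSup_of_mem ?_ ?_)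
  · simp only [mem_filter, mem_powerset, card_map, card_univ, Fintype.card_coe]
    refine ⟨?_, by omega⟩
    intro t ht
    simp only [mem_map, mem_univ, true_and] at ht
    obtain ⟨s, rfl⟩ := ht
    exact inclEmb_mem _
  · exact V.map_mem_hat h (fun s => mem_map_of_mem _ (mem_univ s)) hu

/-- `M` as a sub-FI-module of itself. -/
def topSub (M : FIModule) : M.Sub where
  sub _ := ⊤
  map_mem _ _ _ := trivial

theorem topSub_genLE {k : ℕ} (h : M.GenLE k) : M.topSub.GenLE k := by
  intro T x _
  convert h T x using 6
  simp [topSub]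

/-- Saturation for `V ⊆ N ⊆ M` with `V` generated in degree `≤ d` and `N` in degree `≤ m`, in the
range `n > m + d`. -/
theorem saturation_aux (hMtf : M.TorsionFree) {m d : ℕ} (V N : M.Sub)
    (hVN : ∀ T, V.sub T ≤ N.sub T) (hV : V.GenLE d) (hN : N.GenLE m)
    (n a : ℕ) (hn : n > m + d) (ha : a ≤ n) :
    V.sub (Finset.Icc 1 (n : ℤ)) ⊓
      (⨆ i ∈ Finset.Icc (1 : ℤ) (a : ℤ),
        (M.map (inclEmb (Finset.erase_subset i (Finset.Icc 1 (n : ℤ))))).range) ≤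
    ⨆ i ∈ Finset.Icc (1 : ℤ) (a : ℤ),
      AddSubgroup.map (M.map (inclEmb (Finset.erase_subset i (Finset.Icc 1 (n : ℤ)))))
        (V.sub ((Finset.Icc 1 (n : ℤ)).erase i)) := by
  -- `m + 1` spare points suffice for the successive derivatives.
  set Ω : Finset ℤ := Finset.Icc 1 ((n + (m + 1) : ℕ) : ℤ) with hΩ
  have hTΩ : Finset.Icc 1 (n : ℤ) ⊆ Ω := Finset.Icc_subset_Icc_right (by push_cast; omega)
  let T : Finset Ω := univ.filter fun t => t.1 ≤ (n : ℤ)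
  let A : Finset Ω := univ.filter fun t => t.1 ≤ (a : ℤ)
  have hunder : under T = Finset.Icc 1 (n : ℤ) := by
    ext t
    simp only [mem_map, Function.Embedding.subtype_apply, T, mem_filter, mem_univ, true_and]
    constructor
    · rintro ⟨s, hs, rfl⟩
      exact Finset.mem_Icc.2 ⟨(Finset.mem_Icc.1 s.2).1, hs⟩
    · intro ht
      exact ⟨⟨t, hTΩ ht⟩, (Finset.mem_Icc.1 ht).2, rfl⟩
  have hunder' : ∀ i : Ω, under (T.erase i) = (Finset.Icc 1 (n : ℤ)).erase i.1 := by
    intro i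
    rw [← hunder, under, map_erase]
    rfl
  have hAmem : ∀ i : Ω, i ∈ A ↔ i.1 ∈ Finset.Icc (1 : ℤ) a := by
    intro i
    simp only [A, mem_filter, mem_univ, true_and, Finset.mem_Icc]
    exact ⟨fun h => ⟨(Finset.mem_Icc.1 i.2).1, h⟩, fun h => h.2⟩
  have hAΩ : ∀ i ∈ Finset.Icc (1 : ℤ) a, i ∈ Ω := fun i hi =>
    hTΩ (Finset.Icc_subset_Icc_right (by omega) hi)
  set ι := M.map (inclEmb hTΩ) with hι
  have hhat : ∀ (W : M.Sub) (i : Ω), W.hat Ω (T.erase i) =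
      ((W.sub ((Finset.Icc 1 (n : ℤ)).erase i.1)).map
        (M.map (inclEmb (Finset.erase_subset i.1 (Finset.Icc 1 (n : ℤ)))))).map ι := by
    intro W i
    rw [W.hat_eq ((erase_subset _ _).trans hTΩ) (hunder' i), AddSubgroup.map_map, hι, ← M.map_comp]
    rfl
  have hsup : ∀ W : M.Sub, ⨆ i ∈ A, W.hat Ω (T.erase i) =
      (⨆ i ∈ Finset.Icc (1 : ℤ) (a : ℤ),
        AddSubgroup.map (M.map (inclEmb (Finset.erase_subset i (Finset.Icc 1 (n : ℤ)))))
          (W.sub ((Finset.Icc 1 (n : ℤ)).erase i))).map ι := by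
    intro W
    simp only [AddSubgroup.map_iSup]
    apply le_antisymm
    · refine iSup₂_le fun i hi => ?_
      rw [hhat]
      exact le_iSup₂_of_le i.1 ((hAmem i).1 hi) le_rfl
    · refine iSup₂_le fun i hi => ?_
      rw [← hhat W ⟨i, hAΩ i hi⟩]
      exact le_iSup₂_of_le (f := fun (i : Ω) (_ : i ∈ A) => W.hat Ω (T.erase i)) ⟨i, hAΩ i hi⟩
        ((hAmem _).2 hi) le_rfl
  rintro v ⟨hvV, hvM⟩
  have hcard : T.card = n := by
    have := congrArg Finset.card hunder
    simpa using this
  have key := sat_multi A (d + 1) (m + 1) ∅ (V.hat Ω) (N.hat Ω) (M.topSub.hat Ω) T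
    (V.hat_isSys Ω) (N.hat_isSys Ω) (M.topSub.hat_isSys Ω)
    (fun S => AddSubgroup.map_mono (hVN _)) (Sub.hat_genLT hV Ω) (Sub.hat_genLT hN Ω)
    (disjoint_empty_right _) (by rw [hcard, Fintype.card_coe, hΩ, Int.card_Icc, card_empty]; omega) (by omega)
    (fun i hi => by
      simp only [A, T, mem_filter, mem_univ, true_and] at hi ⊢
      omega)
    (ι v) (by rw [V.hat_eq hTΩ hunder]; exact ⟨v, hvV, rfl⟩)
    (by
      rw [hsup]
      refine ⟨v, ?_, rfl⟩
      simpa [topSub, AddMonoidHom.range_eq_map] using hvM)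
  rw [hsup] at key
  obtain ⟨v', hv', hvv'⟩ := key
  rwa [← hMtf _ hvv']

end FIModule

end Transfer

/-- **Theorem E** (Church–Ellenberg). If `M` is a torsion-free FI-module generated in
degree ≤ k and `V ⊆ M` is a sub-FI-module generated in degree ≤ d, then for all
`n > min(k,d) + d` and all `a ≤ n`,
`V_n ∩ (M_{[n]-{1}} + ⋯ + M_{[n]-{a}}) = V_{[n]-{1}} + ⋯ + V_{[n]-{a}}`
inside `M_n`, where `[n] = {1, …, n}`. -/
theorem FIModule.saturation (M : FIModule) (k d : ℕ)
    (hMtf : M.TorsionFree) (hMgen : M.GenLE k)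
    (V : M.Sub) (hVgen : V.GenLE d)
    (n a : ℕ) (hn : n > min k d + d) (ha : a ≤ n) :
    V.sub (Finset.Icc 1 (n : ℤ)) ⊓
      (⨆ i ∈ Finset.Icc (1 : ℤ) (a : ℤ),
        (M.map (inclEmb (Finset.erase_subset i (Finset.Icc 1 (n : ℤ))))).range) =
    ⨆ i ∈ Finset.Icc (1 : ℤ) (a : ℤ),
      AddSubgroup.map (M.map (inclEmb (Finset.erase_subset i (Finset.Icc 1 (n : ℤ)))))
        (V.sub ((Finset.Icc 1 (n : ℤ)).erase i)) := by
  apply le_antisymm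
  · rcases le_total k d with h | h
    · rw [min_eq_left h] at hn
      exact FIModule.saturation_aux hMtf V M.topSub (fun _ _ _ => trivial) hVgen
        (FIModule.topSub_genLE hMgen) n a hn ha
    · rw [min_eq_right h] at hn
      exact FIModule.saturation_aux hMtf V V (fun _ => le_rfl) hVgen hVgen n a hn ha
  · refine iSup₂_le fun i hi => le_inf ?_ ?_
    · rintro _ ⟨v, hv, rfl⟩
      exact V.map_mem _ hv
    · refine le_iSup₂_of_le i hi ?_
      rintro _ ⟨v, -, rfl⟩
      exact ⟨v, rfl⟩
end

section
/- Let M be a torsion-free FI-module generated in degree ≤ k, and let V ⊆ M be a sub-FI-module generated in degree ≤ d. Then the quotient FI-module M/V is torsion-free in degrees ≥ min(k,d) + d: for every injection f : S → T of finite sets with |S| ≥ min(k,d) + d and every m ∈ M_S, if f_*(m) ∈ V_T then m ∈ V_S. -/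
namespace FIQuot

set_option linter.unusedSectionVars false

variable {α P : Type} [DecidableEq α] [AddCommGroup P]

/-! ### Difference operators and lists of disjoint pairs -/

/-- The operator `1 - (a x)`. -/
def diff (ρ : Equiv.Perm α →* AddMonoid.End P) (a x : α) : P →+ P :=
  AddMonoidHom.id P - (show P →+ P from ρ (Equiv.swap a x))

/-- The operator `∏ (1 - (a x))` over the pairs `(a, x)` of a list, the head acting first. -/
def diffOp (ρ : Equiv.Perm α →* AddMonoid.End P) : List (α × α) → (P →+ P)
  | [] => AddMonoidHom.id P
  | p :: L => (diffOp ρ L).comp (diff ρ p.1 p.2)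

/-- The pairs of `L` are pairwise disjoint, have distinct entries, and avoid `Y`. -/
def Good (Y : Finset α) (L : List (α × α)) : Prop :=
  (L.map Prod.fst).Nodup ∧ (L.map Prod.snd).Nodup ∧ (∀ p ∈ L, ∀ q ∈ L, p.1 ≠ q.2) ∧
    ∀ p ∈ L, p.1 ∉ Y ∧ p.2 ∉ Y

lemma diffOp_cons (ρ : Equiv.Perm α →* AddMonoid.End P) (p : α × α) (L : List (α × α)) (v : P) :
    diffOp ρ (p :: L) v = diffOp ρ L (v - ρ (Equiv.swap p.1 p.2) v) := rfl

lemma diffOp_concat (ρ : Equiv.Perm α →* AddMonoid.End P) (p : α × α) (L : List (α × α)) (v : P) :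
    diffOp ρ (L ++ [p]) v = diffOp ρ L v - ρ (Equiv.swap p.1 p.2) (diffOp ρ L v) := by
  induction L generalizing v with
  | nil => rfl
  | cons q L ih => rw [List.cons_append, diffOp_cons, ih, diffOp_cons]

lemma good_cons {Y : Finset α} {p : α × α} {L : List (α × α)} :
    Good Y (p :: L) ↔ p.1 ∉ Y ∧ p.2 ∉ Y ∧ p.1 ≠ p.2 ∧
      (∀ q ∈ L, p.1 ≠ q.1 ∧ p.1 ≠ q.2 ∧ p.2 ≠ q.1 ∧ p.2 ≠ q.2) ∧ Good Y L := by
  simp only [Good, List.map_cons, List.nodup_cons, List.mem_map, List.mem_cons]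
  constructor
  · rintro ⟨⟨h1, h2⟩, ⟨h3, h4⟩, h5, h6⟩
    refine ⟨(h6 p (.inl rfl)).1, (h6 p (.inl rfl)).2, h5 p (.inl rfl) p (.inl rfl), ?_, h2, h4,
      fun a ha b hb => h5 a (.inr ha) b (.inr hb), fun a ha => h6 a (.inr ha)⟩
    intro q hq
    exact ⟨fun h => h1 ⟨q, hq, h.symm⟩, h5 p (.inl rfl) q (.inr hq),
      fun h => h5 q (.inr hq) p (.inl rfl) h.symm, fun h => h3 ⟨q, hq, h.symm⟩⟩
  · rintro ⟨h1, h2, h3, h4, h5, h6, h7, h8⟩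
    refine ⟨⟨?_, h5⟩, ⟨?_, h6⟩, ?_, ?_⟩
    · rintro ⟨q, hq, h⟩
      exact (h4 q hq).1 h.symm
    · rintro ⟨q, hq, h⟩
      exact (h4 q hq).2.2.2 h.symm
    · rintro a (rfl | ha) b (rfl | hb)
      · exact h3
      · exact (h4 b hb).2.1
      · exact fun h => (h4 a ha).2.2.1 h.symm
      · exact h7 a ha b hb
    · rintro a (rfl | ha)
      · exact ⟨h1, h2⟩
      · exact h8 a ha

lemma swap_comm_apply (ρ : Equiv.Perm α →* AddMonoid.End P) {a x i j : α}
    (h1 : a ≠ i) (h2 : a ≠ j) (h3 : x ≠ i) (h4 : x ≠ j) (v : P) :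
    ρ (Equiv.swap a x) (ρ (Equiv.swap i j) v) = ρ (Equiv.swap i j) (ρ (Equiv.swap a x) v) := by
  have h : Equiv.swap a x * Equiv.swap i j = Equiv.swap i j * Equiv.swap a x := by
    rw [Equiv.mul_swap_eq_swap_mul, Equiv.swap_apply_of_ne_of_ne h1.symm h3.symm,
      Equiv.swap_apply_of_ne_of_ne h2.symm h4.symm]
  have h' := congrArg (fun σ => ρ σ v) h
  rw [map_mul, map_mul] at h'
  exact h'

/-- The factors commute, so a vector fixed by one of the transpositions is killed. -/
lemma diffOp_eq_zero_of_fixed (ρ : Equiv.Perm α →* AddMonoid.End P) {Y : Finset α}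
    {L : List (α × α)} (hL : Good Y L) {p : α × α} (hp : p ∈ L) {v : P}
    (hv : ρ (Equiv.swap p.1 p.2) v = v) : diffOp ρ L v = 0 := by
  induction L generalizing v with
  | nil => simp at hp
  | cons q L ih =>
    rw [diffOp_cons]
    obtain ⟨-, -, -, h4, h5⟩ := good_cons.1 hL
    rcases List.mem_cons.1 hp with rfl | hp
    · rw [hv, sub_self, map_zero]
    · refine ih h5 hp ?_
      obtain ⟨e1, e2, e3, e4⟩ := h4 p hp
      rw [map_sub, hv, swap_comm_apply ρ e1.symm e3.symm e2.symm e4.symm, hv]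

/-- Pigeonhole: a set meeting all pairs of a good list has at least as many elements as the list. -/
lemma length_le_of_meets {Y : Finset α} {L : List (α × α)} (hL : Good Y L) (I : Finset α)
    (h : ∀ p ∈ L, p.1 ∈ I ∨ p.2 ∈ I) : L.length ≤ I.card := by
  induction L generalizing I with
  | nil => simp
  | cons q L ih =>
    obtain ⟨-, -, -, h4, h5⟩ := good_cons.1 hL
    obtain ⟨e, he, hq⟩ : ∃ e ∈ I, ∀ p ∈ L, p.1 ≠ e ∧ p.2 ≠ e := by
      rcases h q (by simp) with h | h
      · exact ⟨_, h, fun p hp => ⟨(h4 p hp).1.symm, (h4 p hp).2.1.symm⟩⟩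
      · exact ⟨_, h, fun p hp => ⟨(h4 p hp).2.2.1.symm, (h4 p hp).2.2.2.symm⟩⟩
    have := ih h5 (I.erase e) (fun p hp => by
      simpa [(hq p hp).1, (hq p hp).2] using h p (by simp [hp]))
    rw [Finset.card_erase_of_mem he] at this
    have := Finset.card_pos.2 ⟨e, he⟩
    simp only [List.length_cons]
    omega

/-! ### Systems of subgroups indexed by finite sets -/

/-- Subgroups `V_U ⊆ P` that behave like the images of a sub-FI-module under the transpositions
avoiding `Y`: they are permuted accordingly, transpositions off `U` fix `V_U` pointwise, and every
product of `k + 1` disjoint factors `1 - (a x)` vanishes on `V_U`. -/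
structure System (ρ : Equiv.Perm α →* AddMonoid.End P) (Y : Finset α) (k : ℕ)
    (V : Finset α → AddSubgroup P) : Prop where
  equivar : ∀ i j, i ∉ Y → j ∉ Y → ∀ U, ∀ v ∈ V U,
    ρ (Equiv.swap i j) v ∈ V (U.image (Equiv.swap i j))
  invar : ∀ i j, i ∉ Y → j ∉ Y → ∀ U, i ∉ U → j ∉ U → ∀ v ∈ V U, ρ (Equiv.swap i j) v = v
  kill : ∀ L, Good Y L → L.length = k + 1 → ∀ U, ∀ v ∈ V U, diffOp ρ L v = 0

/-- The subgroup generated by the `V_U` with `U ⊆ T` and `|U| ≤ d`; this plays the role of `V_T` for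
`V` generated in degree `≤ d`. -/
def spanLE (V : Finset α → AddSubgroup P) (d : ℕ) (T : Finset α) : AddSubgroup P :=
  ⨆ U : {U : Finset α // U ⊆ T ∧ U.card ≤ d}, V U.1

/-- The sum of the subgroups `V_{T - a}` over the first entries `a` of the pairs in `L`. -/
def sumErase (V : Finset α → AddSubgroup P) (d : ℕ) (T : Finset α) (L : List (α × α)) :
    AddSubgroup P :=
  ⨆ p : {p // p ∈ L}, spanLE V d (T.erase p.1.1)

lemma le_spanLE {V : Finset α → AddSubgroup P} {d : ℕ} {T U : Finset α} (h : U ⊆ T)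
    (hc : U.card ≤ d) : V U ≤ spanLE V d T :=
  le_iSup (fun U : {U : Finset α // U ⊆ T ∧ U.card ≤ d} => V U.1) ⟨U, h, hc⟩

lemma spanLE_le {V : Finset α → AddSubgroup P} {d : ℕ} {T : Finset α} {W : AddSubgroup P}
    (h : ∀ U, U ⊆ T → U.card ≤ d → V U ≤ W) : spanLE V d T ≤ W :=
  iSup_le fun U => h U.1 U.2.1 U.2.2

lemma spanLE_mono {V : Finset α → AddSubgroup P} {d : ℕ} {T T' : Finset α} (h : T ⊆ T') :
    spanLE V d T ≤ spanLE V d T' :=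
  spanLE_le fun _ hU hc => le_spanLE (hU.trans h) hc

lemma le_sumErase {V : Finset α → AddSubgroup P} {d : ℕ} {T : Finset α} {L : List (α × α)}
    {p : α × α} (hp : p ∈ L) : spanLE V d (T.erase p.1) ≤ sumErase V d T L :=
  le_iSup (fun p : {p // p ∈ L} => spanLE V d (T.erase p.1.1)) ⟨p, hp⟩

lemma sumErase_le {V : Finset α → AddSubgroup P} {d : ℕ} {T : Finset α} {L : List (α × α)}
    {W : AddSubgroup P} (h : ∀ p ∈ L, spanLE V d (T.erase p.1) ≤ W) : sumErase V d T L ≤ W :=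
  iSup_le fun p => h p.1 p.2

variable {ρ : Equiv.Perm α →* AddMonoid.End P} {Y : Finset α} {k : ℕ}
  {V : Finset α → AddSubgroup P}

lemma System.swap_mem (hV : System ρ Y k V) {d : ℕ} {T : Finset α} {i j : α} (hi : i ∉ Y)
    (hj : j ∉ Y) {v : P} (hv : v ∈ spanLE V d T) :
    ρ (Equiv.swap i j) v ∈ spanLE V d (T.image (Equiv.swap i j)) := by
  suffices h : spanLE V d T ≤ (spanLE V d (T.image (Equiv.swap i j))).comap
      (ρ (Equiv.swap i j) : P →+ P) from h hv
  refine spanLE_le fun U hU hc u hu => ?_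
  exact le_spanLE (Finset.image_subset_image hU) (Finset.card_image_le.trans hc)
    (hV.equivar i j hi hj U u hu)

lemma System.swap_fixed (hV : System ρ Y k V) {d : ℕ} {T : Finset α} {i j : α} (hi : i ∉ Y)
    (hj : j ∉ Y) (hiT : i ∉ T) (hjT : j ∉ T) {v : P} (hv : v ∈ spanLE V d T) :
    ρ (Equiv.swap i j) v = v := by
  suffices h : spanLE V d T ≤ (AddMonoidHom.eqLocus (ρ (Equiv.swap i j) : P →+ P)
      (AddMonoidHom.id P)) from h hv
  refine spanLE_le fun U hU hc u hu => ?_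
  exact hV.invar i j hi hj U (fun h => hiT (hU h)) (fun h => hjT (hU h)) u hu

lemma image_swap_subset {T : Finset α} {i j : α} (hi : i ∈ T) (hj : j ∈ T) :
    T.image (Equiv.swap i j) ⊆ T := by
  intro y hy
  obtain ⟨x, hx, rfl⟩ := Finset.mem_image.1 hy
  rw [Equiv.swap_apply_def]
  split_ifs <;> assumption

lemma System.diffOp_mem (hV : System ρ Y k V) {d : ℕ} {T : Finset α} {L : List (α × α)}
    (hL : Good Y L) (hLT : ∀ p ∈ L, p.1 ∈ T ∧ p.2 ∈ T) {v : P} (hv : v ∈ spanLE V d T) :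
    diffOp ρ L v ∈ spanLE V d T := by
  induction L generalizing v with
  | nil => exact hv
  | cons q L ih =>
    obtain ⟨h1, h2, -, -, h5⟩ := good_cons.1 hL
    rw [diffOp_cons]
    refine ih h5 (fun p hp => hLT p (by simp [hp])) (sub_mem hv ?_)
    exact spanLE_mono (image_swap_subset (hLT q (by simp)).1 (hLT q (by simp)).2)
      (hV.swap_mem h1 h2 hv)

/-- Expanding `∏ (1 - (a j))`, every term but the leading one moves some `a` out of the support. -/
lemma System.sub_diffOp_mem (hV : System ρ Y k V) {d : ℕ} {T U : Finset α} (hU : U ⊆ T)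
    (hc : U.card ≤ d) {L : List (α × α)} (hL : Good Y L)
    (hLT : ∀ p ∈ L, p.1 ∈ T ∧ p.2 ∈ T ∧ p.2 ∉ U) {v : P} (hv : v ∈ V U) :
    v - diffOp ρ L v ∈ sumErase V d T L := by
  induction L with
  | nil => simp [diffOp]
  | cons q L ih =>
    obtain ⟨h1, h2, h3, h4, h5⟩ := good_cons.1 hL
    obtain ⟨hq1, hq2, hq3⟩ := hLT q (by simp)
    rw [diffOp_cons, map_sub, ← sub_add]
    refine add_mem ?_ ?_
    · have hle : sumErase V d T L ≤ sumErase V d T (q :: L) :=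
        sumErase_le fun p hp => le_sumErase (List.mem_cons_of_mem q hp)
      exact hle (ih h5 fun p hp => hLT p (by simp [hp]))
    · refine le_sumErase (p := q) (by simp) (hV.diffOp_mem h5 ?_ ?_)
      · intro p hp
        obtain ⟨e1, e2, e3, e4⟩ := h4 p hp
        have := hLT p (by simp [hp])
        simp only [Finset.mem_erase]
        exact ⟨⟨e1.symm, this.1⟩, e2.symm, this.2.1⟩
      · refine le_spanLE ?_ (Finset.card_image_le.trans hc) (hV.equivar _ _ h1 h2 U v hv)
        intro y hy
        refine Finset.mem_erase.2
          ⟨?_, image_swap_subset hq1 hq2 (Finset.image_subset_image hU hy)⟩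
        rintro rfl
        obtain ⟨x, hx, hxq⟩ := Finset.mem_image.1 hy
        rw [Equiv.swap_apply_eq_iff, Equiv.swap_apply_left] at hxq
        exact hq3 (hxq ▸ hx)

/-- The base of the descending induction: for `|A| = k + 1` the whole of `V_T` is
`∑_{a ∈ A} V_{T - a}`. -/
lemma System.spanLE_le_sumErase (hV : System ρ Y k V) {d : ℕ} {T : Finset α} (hTY : Disjoint T Y)
    (hT : k + d + 1 ≤ T.card) {L : List (α × α)} (hL : Good Y L) (hLT : ∀ p ∈ L, p.1 ∈ T)
    (hlen : L.length = k + 1) : spanLE V d T ≤ sumErase V d T L := by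
  refine spanLE_le fun U hU hc v hv => ?_
  by_cases hA : ∀ p ∈ L, p.1 ∈ U
  · have hcard : k + 1 ≤ (T \ U).card := by
      rw [Finset.card_sdiff_of_subset hU]
      omega
    obtain ⟨B, hB, hBc⟩ := Finset.exists_subset_card_eq hcard
    set L' := (L.map Prod.fst).zip B.toList with hL'
    have hlen' : (L.map Prod.fst).length = B.toList.length := by simp [hlen, hBc]
    have hfst : L'.map Prod.fst = L.map Prod.fst := List.map_fst_zip hlen'.le
    have hsnd : L'.map Prod.snd = B.toList := List.map_snd_zip hlen'.ge
    have m1 : ∀ p ∈ L', ∃ q ∈ L, q.1 = p.1 := by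
      intro p hp
      have : p.1 ∈ L'.map Prod.fst := List.mem_map_of_mem hp
      rwa [hfst, List.mem_map] at this
    have m2 : ∀ p ∈ L', p.2 ∈ T ∧ p.2 ∉ U := by
      intro p hp
      have : p.2 ∈ L'.map Prod.snd := List.mem_map_of_mem hp
      rw [hsnd, Finset.mem_toList] at this
      exact Finset.mem_sdiff.1 (hB this)
    have hgood : Good Y L' := by
      refine ⟨hfst ▸ hL.1, hsnd ▸ B.nodup_toList, ?_, ?_⟩
      · intro p hp q hq h
        obtain ⟨r, hr, hrp⟩ := m1 p hp
        exact (m2 q hq).2 (h ▸ hrp ▸ hA r hr)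
      · intro p hp
        obtain ⟨r, hr, hrp⟩ := m1 p hp
        exact ⟨hrp ▸ (hL.2.2.2 r hr).1, Finset.disjoint_left.1 hTY (m2 p hp).1⟩
    have hzero := hV.kill L' hgood (by simp [hL', hlen, hBc]) U v hv
    have hmem := hV.sub_diffOp_mem hU hc hgood (fun p hp => by
      obtain ⟨r, hr, hrp⟩ := m1 p hp
      exact ⟨hrp ▸ hLT r hr, m2 p hp⟩) hv
    rw [hzero, sub_zero] at hmem
    refine (sumErase_le fun p hp => ?_ : sumErase V d T L' ≤ _) hmem
    obtain ⟨r, hr, hrp⟩ := m1 p hp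
    rw [← hrp]
    exact le_sumErase hr
  · push Not at hA
    obtain ⟨p, hp, hpU⟩ := hA
    exact le_sumErase hp (le_spanLE (Finset.subset_erase.2 ⟨hU, hpU⟩) hc hv)

/-- The system `U ↦ (1 - (a x)) V_{U ∪ a}`. -/
def derived (ρ : Equiv.Perm α →* AddMonoid.End P) (V : Finset α → AddSubgroup P) (a x : α) :
    Finset α → AddSubgroup P :=
  fun U => (V (insert a U)).map (diff ρ a x)

lemma mem_derived {a x : α} {U : Finset α} {w : P} :
    w ∈ derived ρ V a x U ↔ ∃ v ∈ V (insert a U), v - ρ (Equiv.swap a x) v = w :=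
  AddSubgroup.mem_map

lemma System.derive (hV : System ρ Y (k + 1) V) {a x : α} (ha : a ∉ Y) (hx : x ∉ Y)
    (hax : a ≠ x) : System ρ (insert a (insert x Y)) k (derived ρ V a x) where
  equivar i j hi hj U w hw := by
    simp only [Finset.mem_insert, not_or] at hi hj
    obtain ⟨v, hv, rfl⟩ := mem_derived.1 hw
    refine mem_derived.2 ⟨ρ (Equiv.swap i j) v, ?_, ?_⟩
    · have := hV.equivar i j hi.2.2 hj.2.2 _ v hv
      rwa [Finset.image_insert, Equiv.swap_apply_of_ne_of_ne (Ne.symm hi.1) (Ne.symm hj.1)] at this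
    · rw [map_sub, swap_comm_apply ρ (Ne.symm hi.1) (Ne.symm hj.1) (Ne.symm hi.2.1)
        (Ne.symm hj.2.1)]
  invar i j hi hj U hiU hjU w hw := by
    simp only [Finset.mem_insert, not_or] at hi hj
    obtain ⟨v, hv, rfl⟩ := mem_derived.1 hw
    have h := hV.invar i j hi.2.2 hj.2.2 (insert a U) (by simp [hi.1, hiU]) (by simp [hj.1, hjU])
      v hv
    rw [map_sub, ← swap_comm_apply ρ (Ne.symm hi.1) (Ne.symm hj.1) (Ne.symm hi.2.1)
        (Ne.symm hj.2.1), h]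
  kill L hL hlen U w hw := by
    obtain ⟨v, hv, rfl⟩ := mem_derived.1 hw
    rw [← diffOp_cons ρ (a, x)]
    refine hV.kill _ (good_cons.2 ⟨ha, hx, hax, ?_, hL.1, hL.2.1, hL.2.2.1, ?_⟩) (by simp [hlen])
      _ v hv
    · intro q hq
      obtain ⟨h1, h2⟩ := hL.2.2.2 q hq
      simp only [Finset.mem_insert, not_or] at h1 h2
      exact ⟨Ne.symm h1.1, Ne.symm h2.1, Ne.symm h1.2.1, Ne.symm h2.2.1⟩
    · intro q hq
      obtain ⟨h1, h2⟩ := hL.2.2.2 q hq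
      simp only [Finset.mem_insert, not_or] at h1 h2
      exact ⟨h1.2.2, h2.2.2⟩

/-- `1 - (a x)` maps `V_T` into the derived system: it kills the `V_U` with `a ∉ U`. -/
lemma System.sub_swap_mem (hV : System ρ Y k V) {d : ℕ} {T : Finset α} {a x : α} (ha : a ∉ Y)
    (hx : x ∉ Y) (hxT : x ∉ T) {v : P} (hv : v ∈ spanLE V (d + 1) T) :
    v - ρ (Equiv.swap a x) v ∈ spanLE (derived ρ V a x) d (T.erase a) := by
  suffices h : spanLE V (d + 1) T ≤ (spanLE (derived ρ V a x) d (T.erase a)).comap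
      (diff ρ a x) from h hv
  refine spanLE_le fun U hU hc u hu => ?_
  change u - ρ (Equiv.swap a x) u ∈ spanLE (derived ρ V a x) d (T.erase a)
  by_cases haU : a ∈ U
  · refine le_spanLE (U := U.erase a) (Finset.erase_subset_erase a hU) ?_
      (mem_derived.2 ⟨u, ?_, rfl⟩)
    · rw [Finset.card_erase_of_mem haU]
      omega
    · rwa [Finset.insert_erase haU]
  · rw [hV.invar a x ha hx U haU (fun h => hxT (hU h)) u hu, sub_self]
    exact zero_mem _

/-- Elements of `V'_T`, for the derived system `V'`, lift through `1 - (a x)` to `V_{T ∪ a}`. -/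
lemma spanLE_derived_le {d : ℕ} {T T' : Finset α} {a x : α} (h : insert a T ⊆ T') :
    spanLE (derived ρ V a x) d T ≤
      (spanLE V (d + 1) T').map (diff ρ a x) :=
  spanLE_le fun U hU hc => AddSubgroup.map_mono <| le_spanLE
    ((Finset.insert_subset_insert a hU).trans h) ((Finset.card_insert_le a U).trans (by omega))

/-! ### The saturation theorem for systems -/

/-- The condition on `|α|` guarantees enough elements outside `T` to form the pairs. -/
theorem mem_sumErase [Fintype α] (k : ℕ) : ∀ (d : ℕ) (Y : Finset α) (V : Finset α → AddSubgroup P),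
    System ρ Y k V → ∀ T : Finset α, Disjoint T Y → k + d + 1 ≤ T.card →
    Y.card + T.card + k + 1 ≤ Fintype.card α → ∀ L : List (α × α), Good Y L →
    (∀ p ∈ L, p.1 ∈ T ∧ p.2 ∉ T) → L.length ≤ k + 1 → ∀ v ∈ spanLE V d T, diffOp ρ L v = 0 →
    v ∈ sumErase V d T L := by
  induction k with
  | zero =>
    intro d Y V hV T hTY hT _ L hL hLT hlen v hv hz
    rcases L with _ | ⟨p, L⟩
    · rw [show v = 0 from hz]
      exact zero_mem _
    · exact hV.spanLE_le_sumErase hTY hT hL (fun p hp => (hLT p hp).1) (by simp at hlen ⊢; omega) hv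
  | succ k ih =>
    intro d Y V hV T hTY hT hcard
    -- `n` is the number of pairs missing from the base case
    suffices H : ∀ (n : ℕ) (L : List (α × α)), Good Y L → (∀ p ∈ L, p.1 ∈ T ∧ p.2 ∉ T) →
        L.length + n = k + 2 → ∀ v ∈ spanLE V d T, diffOp ρ L v = 0 → v ∈ sumErase V d T L by
      intro L hL hLT hlen
      exact H (k + 2 - L.length) L hL hLT (by omega)
    intro n
    induction n with
    | zero =>
      intro L hL hLT hlen v hv _
      exact hV.spanLE_le_sumErase hTY hT hL (fun p hp => (hLT p hp).1) hlen hv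
    | succ n ihn =>
      intro L hL hLT hlen v hv hz
      rcases L with _ | ⟨⟨a, x⟩, L⟩
      · rw [show v = 0 from hz]
        exact zero_mem _
      rcases d with _ | d
      · refine le_sumErase (p := (a, x)) (by simp) (spanLE_le (fun U _ hc => ?_) hv)
        have : U = ∅ := Finset.card_eq_zero.1 (by omega)
        subst this
        exact le_spanLE (by simp) (by simp)
      set L₀ := (a, x) :: L with hL₀
      obtain ⟨haY, hxY, hax, hd, hLg⟩ := good_cons.1 hL
      obtain ⟨haT, hxT⟩ := hLT (a, x) (by simp [hL₀])
      dsimp only at haY hxY hax hd haT hxT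
      obtain ⟨s, hs, hsL⟩ : ∃ s ∈ T, s ∉ (L₀.map Prod.fst).toFinset := by
        refine Finset.exists_mem_notMem_of_card_lt_card ?_
        have := List.toFinset_card_le (L₀.map Prod.fst)
        rw [List.length_map] at this
        omega
      obtain ⟨y, hy⟩ : ∃ y, y ∉ Y ∪ T ∪ (L₀.map Prod.snd).toFinset := by
        by_contra! h
        have h1 : Fintype.card α ≤ (Y ∪ T ∪ (L₀.map Prod.snd).toFinset).card :=
          Finset.card_le_card (s := Finset.univ) fun z _ => h z
        have h2 := Finset.card_union_le (Y ∪ T) (L₀.map Prod.snd).toFinset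
        have h3 := Finset.card_union_le Y T
        have h4 := List.toFinset_card_le (L₀.map Prod.snd)
        rw [List.length_map] at h4
        omega
      simp only [Finset.mem_union, not_or, List.mem_toFinset, List.mem_map, not_exists, not_and]
        at hsL hy
      obtain ⟨⟨hyY, hyT⟩, hyL⟩ := hy
      have hsY : s ∉ Y := Finset.disjoint_left.1 hTY hs
      have hsa : s ≠ a := fun h => hsL (a, x) (by simp [hL₀]) h.symm
      have hsx : s ≠ x := fun h => hxT (h ▸ hs)
      have hgood : Good Y (L₀ ++ [(s, y)]) := by
        obtain ⟨g1, g2, g3, g4⟩ := hL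
        refine ⟨?_, ?_, ?_, ?_⟩
        · rw [List.map_append, List.nodup_append]
          refine ⟨g1, by simp, ?_⟩
          simp only [List.mem_map, List.map_cons, List.map_nil, List.mem_singleton]
          rintro _ ⟨p, hp, rfl⟩ _ rfl
          exact hsL p hp
        · rw [List.map_append, List.nodup_append]
          refine ⟨g2, by simp, ?_⟩
          simp only [List.mem_map, List.map_cons, List.map_nil, List.mem_singleton]
          rintro _ ⟨p, hp, rfl⟩ _ rfl
          exact hyL p hp
        · simp only [List.mem_append, List.mem_singleton]
          rintro p (hp | rfl) q (hq | rfl)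
          · exact g3 p hp q hq
          · exact fun (h : p.1 = y) => hyT (h ▸ (hLT p hp).1)
          · exact fun h => (hLT q hq).2 (h ▸ hs)
          · exact fun (h : s = y) => hyT (h ▸ hs)
        · simp only [List.mem_append, List.mem_singleton]
          rintro p (hp | rfl)
          · exact g4 p hp
          · exact ⟨hsY, hyY⟩
      have hbig := ihn (L₀ ++ [(s, y)]) hgood (by
        simp only [List.mem_append, List.mem_singleton]
        rintro p (hp | rfl)
        · exact hLT p hp
        · exact ⟨hs, hyT⟩) (by simp only [List.length_append, List.length_singleton]; omega) v hv
        (by rw [diffOp_concat, hz, map_zero, sub_zero])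
      have hsup : sumErase V (d + 1) T (L₀ ++ [(s, y)]) ≤
          sumErase V (d + 1) T L₀ ⊔ spanLE V (d + 1) (T.erase s) := by
        refine sumErase_le fun p hp => ?_
        rcases List.mem_append.1 hp with hp | hp
        · exact (le_sumErase hp).trans le_sup_left
        · rw [List.mem_singleton.1 hp]
          exact le_sup_right
      obtain ⟨u, hu, w, hw, rfl⟩ := AddSubgroup.mem_sup.1 (hsup hbig)
      refine add_mem hu ?_
      have hu0 : diffOp ρ L₀ u = 0 := by
        suffices h : sumErase V (d + 1) T L₀ ≤ (diffOp ρ L₀).ker from h hu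
        refine sumErase_le fun p hp t ht => ?_
        have hpY := hL.2.2.2 p hp
        exact diffOp_eq_zero_of_fixed ρ hL hp (hV.swap_fixed hpY.1 hpY.2 (by simp)
          (fun h => (hLT p hp).2 (Finset.mem_of_mem_erase h)) ht)
      have hw0 : diffOp ρ L (w - ρ (Equiv.swap a x) w) = 0 := by
        rw [map_add, hu0, zero_add, hL₀, diffOp_cons] at hz
        exact hz
      have hxTs : x ∉ T.erase s := fun h => hxT (Finset.mem_of_mem_erase h)
      have hw' := hV.sub_swap_mem haY hxY hxTs hw
      have hc1 : (T.erase s).card = T.card - 1 := Finset.card_erase_of_mem hs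
      have hc2 : ((T.erase s).erase a).card = (T.erase s).card - 1 :=
        Finset.card_erase_of_mem (Finset.mem_erase.2 ⟨hsa.symm, haT⟩)
      have hYc : (insert a (insert x Y)).card ≤ Y.card + 2 :=
        (Finset.card_insert_le _ _).trans (by have := Finset.card_insert_le x Y; omega)
      have hrec := ih d (insert a (insert x Y)) (derived ρ V a x) (hV.derive haY hxY hax)
        ((T.erase s).erase a) (by
          rw [Finset.disjoint_left]
          intro z hz1 hz2
          simp only [Finset.mem_erase] at hz1
          simp only [Finset.mem_insert] at hz2
          rcases hz2 with rfl | rfl | hz2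
          · exact hz1.1 rfl
          · exact hxT hz1.2.2
          · exact Finset.disjoint_left.1 hTY hz1.2.2 hz2)
        (by omega) (by omega) L
        ⟨hLg.1, hLg.2.1, hLg.2.2.1, fun p hp => by
          obtain ⟨e1, e2, e3, e4⟩ := hd p hp
          have := hLg.2.2.2 p hp
          simp only [Finset.mem_insert, not_or]
          exact ⟨⟨e1.symm, e3.symm, this.1⟩, e2.symm, e4.symm, this.2⟩⟩
        (fun p hp => by
          have h1 := hLT p (by simp [hL₀, hp])
          simp only [Finset.mem_erase]
          exact ⟨⟨(hd p hp).1.symm, hsL p (by simp [hL₀, hp]), h1.1⟩, fun h => h1.2 h.2.2⟩)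
        (by simp only [hL₀, List.length_cons] at hlen; omega) _ hw' hw0
      have hlift : sumErase (derived ρ V a x) d ((T.erase s).erase a) L ≤
          (sumErase V (d + 1) (T.erase s) L).map
            (diff ρ a x) := by
        refine sumErase_le fun p hp => ?_
        refine (spanLE_derived_le (T' := (T.erase s).erase p.1) ?_).trans
          (AddSubgroup.map_mono (le_sumErase hp))
        intro z hz
        simp only [Finset.mem_insert, Finset.mem_erase] at hz ⊢
        rcases hz with rfl | hz
        · exact ⟨(hd p hp).1, hsa.symm, haT⟩
        · exact ⟨hz.1, hz.2.2⟩
      obtain ⟨u', hu', hu'w⟩ := AddSubgroup.mem_map.1 (hlift hrec)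
      replace hu'w : u' - ρ (Equiv.swap a x) u' = w - ρ (Equiv.swap a x) w := hu'w
      have hz1 : ρ (Equiv.swap a x) (w - u') = w - u' := by
        rw [map_sub]
        have h : w - u' - (ρ (Equiv.swap a x) w - ρ (Equiv.swap a x) u') =
            (w - ρ (Equiv.swap a x) w) - (u' - ρ (Equiv.swap a x) u') := by abel
        rw [← hu'w, sub_self] at h
        exact (sub_eq_zero.1 h).symm
      have hzs : w - u' ∈ spanLE V (d + 1) (T.erase s) := by
        refine sub_mem hw ((sumErase_le fun p hp => ?_ : sumErase V (d + 1) (T.erase s) L ≤ _) hu')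
        exact spanLE_mono (Finset.erase_subset _ _)
      have hz2 : ρ (Equiv.swap s x) (w - u') = w - u' :=
        hV.swap_fixed hsY hxY (by simp) hxTs hzs
      -- `(a s) = (s x) (a x) (s x)`
      have hz3 : ρ (Equiv.swap a s) (w - u') = w - u' := by
        have h : Equiv.swap a s = Equiv.swap s x * Equiv.swap a x * Equiv.swap s x := by
          rw [Equiv.mul_swap_eq_swap_mul (Equiv.swap s x) a x, Equiv.swap_apply_right,
            Equiv.swap_apply_of_ne_of_ne hsa.symm hax, mul_assoc, Equiv.swap_mul_self, mul_one]
        rw [h, map_mul, map_mul]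
        change ρ (Equiv.swap s x) (ρ (Equiv.swap a x) (ρ (Equiv.swap s x) (w - u'))) = _
        rw [hz2, hz1, hz2]
      have hza : w - u' ∈ spanLE V (d + 1) (T.erase a) := by
        have h := hV.swap_mem (i := a) (j := s) haY hsY hzs
        rw [hz3] at h
        refine spanLE_mono ?_ h
        intro z hz
        obtain ⟨t, ht, rfl⟩ := Finset.mem_image.1 hz
        rw [Finset.mem_erase] at ht ⊢
        refine ⟨fun h => ht.1 ?_, image_swap_subset haT hs (Finset.mem_image_of_mem _ ht.2)⟩
        rwa [Equiv.swap_apply_eq_iff, Equiv.swap_apply_left] at h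
      rw [← sub_add_cancel w u']
      refine add_mem (le_sumErase (p := (a, x)) (by simp [hL₀]) hza) ?_
      refine (sumErase_le fun p hp => ?_ : sumErase V (d + 1) (T.erase s) L ≤ _) hu'
      exact (spanLE_mono (Finset.erase_subset_erase _ (Finset.erase_subset _ _))).trans
        (le_sumErase (by simp [hL₀, hp]))

/-- An element of `V_T` fixed by all transpositions off `S` lies in `V_S`: the elements of `T - S`
are removed one at a time. -/
theorem System.mem_of_fixed [Fintype α] (hV : System ρ ∅ k V) {d : ℕ} {S : Finset α}
    (hS : k + d ≤ S.card) {v : P}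
    (hv : ∀ i j, i ∉ S → j ∉ S → ρ (Equiv.swap i j) v = v) (T : Finset α) (hST : S ⊆ T)
    (hcard : T.card + k + 1 ≤ Fintype.card α) (hvT : v ∈ spanLE V d T) : v ∈ spanLE V d S := by
  induction T using Finset.strongInduction with
  | H T ih =>
    rcases hST.eq_or_ssubset with rfl | hss
    · exact hvT
    obtain ⟨t, htT, htS⟩ := Finset.exists_of_ssubset hss
    have hlt := Finset.card_lt_card hss
    obtain ⟨x, hx⟩ : ∃ x, x ∉ T := by
      by_contra! h
      have h1 : Fintype.card α ≤ T.card := Finset.card_le_card (s := Finset.univ) fun z _ => h z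
      omega
    have htx : t ≠ x := fun h => hx (h ▸ htT)
    have hmem := mem_sumErase k d ∅ V hV T (by simp) (by omega) (by simp; omega) [(t, x)]
      (by simp [Good, htx]) (by simp [htT, hx]) (by simp) v hvT (by
        rw [diffOp_cons, hv t x htS (fun h => hx (hST h)), sub_self, map_zero])
    have hmem' : v ∈ spanLE V d (T.erase t) := by
      refine (sumErase_le fun p hp => ?_ : sumErase V d T [(t, x)] ≤ _) hmem
      rw [List.mem_singleton.1 hp]
    have := Finset.card_erase_of_mem htT
    exact ih _ (Finset.erase_ssubset htT) (Finset.subset_erase.2 ⟨hST, htS⟩) (by omega) hmem'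

/-! ### The system attached to a sub-FI-module -/

/-- The action of the permutations of `Ω` on `M_Ω`. -/
def permAction (M : FIModule) (Ω : Finset ℤ) : Equiv.Perm ↥Ω →* AddMonoid.End (M.obj Ω) where
  toFun σ := M.map σ.toEmbedding
  map_one' := M.map_id Ω
  map_mul' σ τ := M.map_comp τ.toEmbedding σ.toEmbedding

/-- The subgroup of `M_Ω` generated by the images of `V` under injections with values in `U`. -/
def imageIn {M : FIModule} (V : M.Sub) (Ω : Finset ℤ) (U : Finset ↥Ω) : AddSubgroup (M.obj Ω) :=
  AddSubgroup.closure {y | ∃ (S : Finset ℤ) (f : ↥S ↪ ↥Ω) (v : M.obj S),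
    (∀ x, f x ∈ U) ∧ v ∈ V.sub S ∧ y = M.map f v}

lemma permAction_map (M : FIModule) {S Ω : Finset ℤ} (f : ↥S ↪ ↥Ω) (σ : Equiv.Perm ↥Ω)
    (v : M.obj S) : permAction M Ω σ (M.map f v) = M.map (f.trans σ.toEmbedding) v := by
  rw [M.map_comp]
  rfl

lemma permAction_fixed (M : FIModule) {S Ω : Finset ℤ} (f : ↥S ↪ ↥Ω) {i j : ↥Ω}
    (hi : ∀ x, f x ≠ i) (hj : ∀ x, f x ≠ j) (v : M.obj S) :
    permAction M Ω (Equiv.swap i j) (M.map f v) = M.map f v := by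
  rw [permAction_map]
  congr 2
  ext x
  simp [Equiv.swap_apply_of_ne_of_ne (hi x) (hj x)]

lemma diffOp_map_eq_zero (M : FIModule) {S Ω : Finset ℤ} (f : ↥S ↪ ↥Ω) {L : List (↥Ω × ↥Ω)}
    (hL : Good ∅ L) (hlen : S.card < L.length) (v : M.obj S) :
    diffOp (permAction M Ω) L (M.map f v) = 0 := by
  by_cases h : ∀ p ∈ L, p.1 ∈ Finset.univ.map f ∨ p.2 ∈ Finset.univ.map f
  · have := length_le_of_meets hL _ h
    rw [Finset.card_map, Finset.card_univ, Fintype.card_coe] at this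
    omega
  · push Not at h
    obtain ⟨p, hp, h1, h2⟩ := h
    simp only [Finset.mem_map, Finset.mem_univ, true_and, not_exists] at h1 h2
    exact diffOp_eq_zero_of_fixed _ hL hp (permAction_fixed M f h1 h2 v)

lemma system_imageIn (M : FIModule) (k d : ℕ) (hM : M.GenLE k) (V : M.Sub) (hV : V.GenLE d)
    (Ω : Finset ℤ) : System (permAction M Ω) ∅ (min k d) (imageIn V Ω) where
  equivar i j _ _ U v hv := by
    suffices h : imageIn V Ω U ≤ (imageIn V Ω (U.image (Equiv.swap i j))).comap
      (permAction M Ω (Equiv.swap i j) : M.obj Ω →+ M.obj Ω) from h hv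
    refine (AddSubgroup.closure_le _).2 ?_
    rintro _ ⟨S, f, v, hf, hv, rfl⟩
    refine AddSubgroup.subset_closure ⟨S, f.trans (Equiv.swap i j).toEmbedding, v, ?_, hv, ?_⟩
    · exact fun x => Finset.mem_image_of_mem _ (hf x)
    · exact permAction_map M f _ v
  invar i j _ _ U hi hj v hv := by
    suffices h : imageIn V Ω U ≤ AddMonoidHom.eqLocus
      (permAction M Ω (Equiv.swap i j) : M.obj Ω →+ M.obj Ω) (AddMonoidHom.id _) from h hv
    refine (AddSubgroup.closure_le _).2 ?_
    rintro _ ⟨S, f, v, hf, hv, rfl⟩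
    exact permAction_fixed M f (fun x (h : f x = i) => hi (h ▸ hf x))
      (fun x (h : f x = j) => hj (h ▸ hf x)) v
  kill L hL hlen U v hv := by
    rcases le_total k d with h | h
    · rw [min_eq_left h] at hlen
      refine ((AddSubgroup.closure_le (diffOp (permAction M Ω) L).ker).2 ?_) (hM Ω v)
      rintro _ ⟨S, f, w, hS, rfl⟩
      exact diffOp_map_eq_zero M f hL (by omega) w
    · rw [min_eq_right h] at hlen
      suffices h : imageIn V Ω U ≤ (diffOp (permAction M Ω) L).ker from h hv
      refine (AddSubgroup.closure_le _).2 ?_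
      rintro _ ⟨S, f, w, -, hw, rfl⟩
      have hle : V.sub S ≤ ((diffOp (permAction M Ω) L).comp (M.map f)).ker := by
        refine (hV S).trans ((AddSubgroup.closure_le _).2 ?_)
        rintro _ ⟨S', g, w', hS', -, rfl⟩
        change diffOp (permAction M Ω) L (M.map f (M.map g w')) = 0
        rw [← AddMonoidHom.comp_apply (M.map f), ← M.map_comp]
        exact diffOp_map_eq_zero M _ hL (by omega) w'
      exact hle hw

lemma map_mem_spanLE {M : FIModule} {V : M.Sub} {d : ℕ} (hV : V.GenLE d) {T Ω : Finset ℤ}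
    (e : ↥T ↪ ↥Ω) {v : M.obj T} (hv : v ∈ V.sub T) :
    M.map e v ∈ spanLE (imageIn V Ω) d (Finset.univ.map e) := by
  suffices h : V.sub T ≤ (spanLE (imageIn V Ω) d (Finset.univ.map e)).comap (M.map e) from h hv
  refine (hV T).trans ((AddSubgroup.closure_le _).2 ?_)
  rintro _ ⟨S, f, w, hS, hw, rfl⟩
  change M.map e (M.map f w) ∈ spanLE (imageIn V Ω) d (Finset.univ.map e)
  rw [← AddMonoidHom.comp_apply (M.map e), ← M.map_comp]
  refine le_spanLE (U := Finset.univ.map (f.trans e)) ?_ ?_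
    (AddSubgroup.subset_closure ⟨S, f.trans e, w, by simp, hw, rfl⟩)
  · intro y hy
    simp only [Finset.mem_map, Finset.mem_univ, true_and] at hy ⊢
    obtain ⟨x, rfl⟩ := hy
    exact ⟨f x, rfl⟩
  · simpa using hS

lemma spanLE_le_map {M : FIModule} (V : M.Sub) (d : ℕ) {S Ω : Finset ℤ} (e : ↥S ↪ ↥Ω) :
    spanLE (imageIn V Ω) d (Finset.univ.map e) ≤ (V.sub S).map (M.map e) := by
  refine spanLE_le fun U hU _ => (AddSubgroup.closure_le _).2 ?_
  rintro _ ⟨R, f, v, hf, hv, rfl⟩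
  have hex : ∀ x, ∃ y, e y = f x := fun x => by simpa using hU (hf x)
  choose g hg using hex
  let g' : ↥R ↪ ↥S := ⟨g, fun x y h => f.injective (by rw [← hg x, ← hg y, h])⟩
  have hfg : f = g'.trans e := by
    ext x
    exact congrArg Subtype.val (hg x).symm
  refine AddSubgroup.mem_map.2 ⟨M.map g' v, V.map_mem g' hv, ?_⟩
  rw [hfg, M.map_comp]
  rfl

end FIQuot

/-- **Corollary F** (Church–Ellenberg). If `M` is a torsion-free FI-module generated in
degree ≤ k and `V ⊆ M` is a sub-FI-module generated in degree ≤ d, then the quotient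
`M/V` is torsion-free in degrees ≥ min(k,d) + d: for every injection `f : S ↪ T` with
`|S| ≥ min(k,d) + d` and every `m ∈ M_S`, if `f_*(m) ∈ V_T` then `m ∈ V_S`. -/
theorem FIModule.quotient_torsionFree (M : FIModule) (k d : ℕ)
    (hMtf : M.TorsionFree) (hMgen : M.GenLE k)
    (V : M.Sub) (hVgen : V.GenLE d)
    {S T : Finset ℤ} (f : ↥S ↪ ↥T) (hS : S.card ≥ min k d + d)
    (m : M.obj S) (hm : M.map f m ∈ V.sub T) :
    m ∈ V.sub S := by
  -- `min k d + 1` elements outside `T` are all the room that `mem_of_fixed` needs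
  obtain ⟨Ω, hTΩ, hΩ⟩ := Infinite.exists_superset_card_eq T (T.card + min k d + 1) (by omega)
  have hmem := FIQuot.map_mem_spanLE hVgen (inclEmb hTΩ) hm
  rw [← AddMonoidHom.comp_apply, ← M.map_comp] at hmem
  have hsub : Finset.univ.map (f.trans (inclEmb hTΩ)) ⊆ Finset.univ.map (inclEmb hTΩ) := by
    intro y hy
    simp only [Finset.mem_map, Finset.mem_univ, true_and] at hy ⊢
    obtain ⟨x, rfl⟩ := hy
    exact ⟨f x, rfl⟩
  have hfix := (FIQuot.system_imageIn M k d hMgen V hVgen Ω).mem_of_fixed (d := d)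
    (S := Finset.univ.map (f.trans (inclEmb hTΩ))) (by simpa using hS)
    (fun i j hi hj => FIQuot.permAction_fixed M _ (by simpa using hi) (by simpa using hj) m)
    _ hsub (by simp [hΩ]) hmem
  obtain ⟨v, hv, hvm⟩ := AddSubgroup.mem_map.1 (FIQuot.spanLE_le_map V d _ hfix)
  exact hMtf _ hvm ▸ hv
end

section
/- Let V be a torsion-free FI-module generated in degree ≤ d such that I_{K+1}·V_n = 0 for all n (for example, this holds if V embeds into an FI-module generated in degree ≤ K). Then for all n > K + d, V_n = V_{[n]−{1}} + V_{[n]−{2}} + ⋯ + V_{[n]−{K+1}}, where the V_{[n]−{i}} are regarded as subgroups of V_n via the inclusions [n]−{i} ⊆ [n]. -/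
/-- Composition (in the given order) of a list of additive endomorphisms. -/
def compList {A : Type} [AddCommGroup A] : List (A →+ A) → (A →+ A)
  | [] => AddMonoidHom.id A
  | f :: l => f.comp (compList l)

/-- The operator `J^i_j = id − (i j)` of `ℤ[S_T]` acting on `V_T`, where the
transposition `(i j)` acts through the FI-module structure. -/
def FIModule.JOp (V : FIModule) (T : Finset ℤ) (i j : ↥T) : V.obj T →+ V.obj T :=
  AddMonoidHom.id (V.obj T) - V.map (Equiv.swap i j).toEmbedding

/-- `I_m · V_n = 0` for all `n`: every generator `J^{i₁}_{j₁} ⋯ J^{i_m}_{j_m}` of the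
two-sided ideal `I_m ⊆ ℤ[S_n]` (the `2m` indices pairwise distinct) annihilates
`V_n = V_{[n]}`.  Since the generating set is stable under conjugation and the group
elements act invertibly, this is equivalent to the two-sided ideal `I_m`
annihilating `V_n`. -/
def FIModule.AnnIdeal (V : FIModule) (m : ℕ) : Prop :=
  ∀ (n : ℕ) (ii jj : Fin m → ↥(Finset.Icc (1:ℤ) (n:ℤ))),
    Function.Injective (Sum.elim ii jj) →
    compList (List.ofFn fun s : Fin m =>
      FIModule.JOp V (Finset.Icc (1:ℤ) (n:ℤ)) (ii s) (jj s)) = 0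

/-- The subgroup of `V_T` spanned by the elements `f_* v` for which the image of the injection `f`
misses some element of `A`. -/
def FIModule.missSpan (V : FIModule) {T : Finset ℤ} (A : Set ↥T) : AddSubgroup (V.obj T) :=
  AddSubgroup.closure {y | ∃ i ∈ A, ∃ (S : Finset ℤ) (f : ↥S ↪ ↥T) (v : V.obj S),
    (∀ s, f s ≠ i) ∧ y = V.map f v}

lemma FIModule.missSpan_mono (V : FIModule) {T : Finset ℤ} {A B : Set ↥T} (h : A ⊆ B) :
    V.missSpan A ≤ V.missSpan B := by
  apply AddSubgroup.closure_mono
  rintro y ⟨i, hi, r⟩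
  exact ⟨i, h hi, r⟩

lemma FIModule.map_mem_missSpan (V : FIModule) {S T : Finset ℤ} {A : Set ↥T} {i : ↥T} (hi : i ∈ A)
    (f : ↥S ↪ ↥T) (v : V.obj S) (hf : ∀ s, f s ≠ i) : V.map f v ∈ V.missSpan A :=
  AddSubgroup.subset_closure ⟨i, hi, S, f, v, hf, rfl⟩

/-- A transposition `(a b)` with `a, b ∉ A` fixes `A` pointwise, so `J^a_b` preserves the span. -/
lemma FIModule.JOp_mem_missSpan (V : FIModule) {T : Finset ℤ} {A : Set ↥T} {a b : ↥T}
    (ha : a ∉ A) (hb : b ∉ A) {w : V.obj T} (hw : w ∈ V.missSpan A) :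
    V.JOp T a b w ∈ V.missSpan A := by
  refine sub_mem hw ?_
  induction hw using AddSubgroup.closure_induction with
  | mem x hx =>
    obtain ⟨i, hi, S, f, v, hf, rfl⟩ := hx
    rw [← AddMonoidHom.comp_apply, ← V.map_comp]
    refine V.map_mem_missSpan hi _ v fun s hs => hf s ?_
    have hia : i ≠ a := fun h => ha (h ▸ hi)
    have hib : i ≠ b := fun h => hb (h ▸ hi)
    have hs' : Equiv.swap a b (f s) = i := hs
    rw [← Equiv.swap_apply_of_ne_of_ne hia hib] at hs'
    exact (Equiv.swap a b).injective hs'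
  | zero => simp [zero_mem]
  | add x y _ _ hx hy => rw [map_add]; exact add_mem hx hy
  | neg x _ hx => rw [map_neg]; exact neg_mem hx

/-- If the image of `f` contains none of the `j`'s, then the product of the operators `J^i_j`
moves `f_* v` only by elements coming from injections that miss one of the `i`'s. -/
lemma FIModule.compList_sub_mem (V : FIModule) {S T : Finset ℤ} (f : ↥S ↪ ↥T) (v : V.obj S)
    (l : List (↥T × ↥T)) (hl : l.Pairwise fun p q => p.1 ≠ q.1 ∧ p.2 ≠ q.1)
    (hf : ∀ p ∈ l, ∀ s, f s ≠ p.2) :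
    compList (l.map fun p => V.JOp T p.1 p.2) (V.map f v) - V.map f v ∈
      V.missSpan {i | ∃ p ∈ l, p.1 = i} := by
  induction l with
  | nil => simp [compList, zero_mem]
  | cons p l ih =>
    rw [List.pairwise_cons] at hl
    have hw := ih hl.2 fun q hq => hf q (List.mem_cons_of_mem _ hq)
    set x := V.map f v with hx
    set c := compList (l.map fun p => V.JOp T p.1 p.2) x with hc
    have h1 : V.JOp T p.1 p.2 (c - x) ∈ V.missSpan {i | ∃ q ∈ p :: l, q.1 = i} := by
      refine V.missSpan_mono ?_ (V.JOp_mem_missSpan ?_ ?_ hw)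
      · rintro i ⟨q, hq, rfl⟩
        exact ⟨q, List.mem_cons_of_mem _ hq, rfl⟩
      · rintro ⟨q, hq, h⟩
        exact (hl.1 q hq).1 h.symm
      · rintro ⟨q, hq, h⟩
        exact (hl.1 q hq).2 h.symm
    have h2 : V.map (Equiv.swap p.1 p.2).toEmbedding x ∈
        V.missSpan {i | ∃ q ∈ p :: l, q.1 = i} := by
      rw [hx, ← AddMonoidHom.comp_apply, ← V.map_comp]
      have hp : p.1 ∈ {i | ∃ q ∈ p :: l, q.1 = i} := ⟨p, List.mem_cons_self, rfl⟩
      refine V.map_mem_missSpan hp _ v fun s hs => ?_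
      have hs' : Equiv.swap p.1 p.2 (f s) = p.1 := hs
      refine hf p List.mem_cons_self s ?_
      rw [← Equiv.swap_apply_right p.1 p.2] at hs'
      exact (Equiv.swap p.1 p.2).injective (by simpa using hs')
    have h3 : V.JOp T p.1 p.2 x = x - V.map (Equiv.swap p.1 p.2).toEmbedding x := rfl
    have h4 : compList ((p :: l).map fun p => V.JOp T p.1 p.2) x - x =
        V.JOp T p.1 p.2 (c - x) - V.map (Equiv.swap p.1 p.2).toEmbedding x := by
      rw [map_sub, h3]
      change V.JOp T p.1 p.2 c - x = _
      abel
    rw [h4]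
    exact sub_mem h1 h2

/-- An injection that misses `i` factors through `T − {i}`. -/
lemma FIModule.map_mem_range_erase (V : FIModule) {S T : Finset ℤ} {i : ℤ} (f : ↥S ↪ ↥T)
    (v : V.obj S) (hf : ∀ s, (f s : ℤ) ≠ i) :
    V.map f v ∈ (V.map (inclEmb (Finset.erase_subset i T))).range := by
  let g : ↥S ↪ ↥(T.erase i) :=
    ⟨fun s => ⟨f s, Finset.mem_erase.2 ⟨hf s, (f s).2⟩⟩, fun a b h =>
      f.injective (Subtype.ext (congrArg (fun z : ↥(T.erase i) => (z : ℤ)) h))⟩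
  refine ⟨V.map g v, ?_⟩
  rw [← AddMonoidHom.comp_apply, ← V.map_comp]
  rfl

/-- **Corollary 3.3** (Church–Ellenberg). Let `V` be a torsion-free FI-module generated
in degree ≤ d with `I_{K+1} · V_n = 0` for all `n` (e.g. if `V` embeds into an
FI-module generated in degree ≤ K).  Then for all `n > K + d`,
`V_n = V_{[n]−{1}} + V_{[n]−{2}} + ⋯ + V_{[n]−{K+1}}` inside `V_n`. -/
theorem FIModule.sum_erase_eq_top (V : FIModule) (K d : ℕ)
    (hVtf : V.TorsionFree) (hVgen : V.GenLE d) (hann : V.AnnIdeal (K + 1))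
    (n : ℕ) (hn : n > K + d) :
    (⨆ i ∈ Finset.Icc (1 : ℤ) ((K : ℤ) + 1),
      (V.map (inclEmb (Finset.erase_subset i (Finset.Icc 1 (n : ℤ))))).range) =
    (⊤ : AddSubgroup (V.obj (Finset.Icc 1 (n : ℤ)))) := by
  set T := Finset.Icc (1 : ℤ) (n : ℤ) with hT
  set W := ⨆ i ∈ Finset.Icc (1 : ℤ) ((K : ℤ) + 1),
      (V.map (inclEmb (Finset.erase_subset i T))).range with hW
  rw [eq_top_iff]
  rintro x -
  have hmiss : ∀ i ∈ Finset.Icc (1 : ℤ) ((K : ℤ) + 1), ∀ (S : Finset ℤ) (f : ↥S ↪ ↥T)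
      (v : V.obj S), (∀ s, (f s : ℤ) ≠ i) → V.map f v ∈ W := fun i hi S f v hf =>
    (le_iSup₂ (f := fun i (_ : i ∈ Finset.Icc (1 : ℤ) ((K : ℤ) + 1)) =>
      (V.map (inclEmb (Finset.erase_subset i T))).range) i hi) (V.map_mem_range_erase f v hf)
  refine (AddSubgroup.closure_le W).2 ?_ (hVgen T x)
  rintro _ ⟨S, f, v, hS, rfl⟩
  by_cases h : ∃ i ∈ Finset.Icc (1 : ℤ) ((K : ℤ) + 1), ∀ s, (f s : ℤ) ≠ i
  · obtain ⟨i, hi, hf⟩ := h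
    exact hmiss i hi S f v hf
  push Not at h
  have hcard : K + 1 ≤ ((Finset.univ.map f)ᶜ : Finset ↥T).card := by
    rw [Finset.card_compl, Finset.card_map, Finset.card_univ, Fintype.card_coe, Fintype.card_coe,
      hT, Int.card_Icc]
    omega
  obtain ⟨j⟩ : Nonempty (Fin (K + 1) ↪ ↥((Finset.univ.map f)ᶜ : Finset ↥T)) :=
    Function.Embedding.nonempty_of_card_le (by rwa [Fintype.card_fin, Fintype.card_coe])
  have hj : ∀ t s, f s ≠ (j t).1 := by
    intro t s hs
    have := (j t).2
    rw [Finset.mem_compl, ← hs] at this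
    exact this (Finset.mem_map_of_mem f (Finset.mem_univ s))
  let ii : Fin (K + 1) → ↥T := fun t => ⟨(t : ℤ) + 1, by
    rw [hT, Finset.mem_Icc]; have := t.2; omega⟩
  let jj : Fin (K + 1) → ↥T := fun t => (j t).1
  have hii : ∀ t, (ii t : ℤ) ∈ Finset.Icc (1 : ℤ) ((K : ℤ) + 1) := fun t => by
    rw [Finset.mem_Icc]; have := t.2; simp only [ii]; omega
  have hii_inj : Function.Injective ii := fun s t hst => by
    have : (s : ℤ) + 1 = (t : ℤ) + 1 := congrArg Subtype.val hst
    exact Fin.ext (by omega)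
  have hjj_inj : Function.Injective jj := Subtype.val_injective.comp j.injective
  -- every `i ≤ K + 1` is in the image of `f`, and no `j` is
  have hij : ∀ s t, ii s ≠ jj t := fun s t hst => by
    obtain ⟨u, hu⟩ := h _ (hii s)
    exact hj t u ((Subtype.ext hu).trans hst)
  have hzero := hann n ii jj (hii_inj.sumElim hjj_inj hij)
  have key := V.compList_sub_mem f v (List.ofFn fun t => (ii t, jj t))
    (List.pairwise_ofFn.2 fun s t hst =>
      ⟨fun e => hst.ne (hii_inj e), fun e => hij t s e.symm⟩)
    (by
      intro p hp
      obtain ⟨t, rfl⟩ := (List.mem_ofFn' _ _).1 hp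
      exact hj t)
  rw [List.map_ofFn] at key
  have hzero' : compList (List.ofFn ((fun p : ↥T × ↥T => V.JOp T p.1 p.2) ∘
      fun t => (ii t, jj t))) = 0 := hzero
  rw [hzero', AddMonoidHom.zero_apply, zero_sub, neg_mem_iff] at key
  refine (AddSubgroup.closure_le W).2 ?_ key
  rintro _ ⟨i, ⟨p, hp, rfl⟩, S', g, v', hg, rfl⟩
  obtain ⟨t, rfl⟩ := (List.mem_ofFn' _ _).1 hp
  exact hmiss _ (hii t) S' g v' fun s hs => hg s (Subtype.ext hs)
end

section
/- Let M be an FI-module generated in degree ≤ k. Then for every n, the ideal I_{k+1} of ℤ[S_n] annihilates M_n: I_{k+1}·M_n = 0. -/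
theorem compList_comm {A : Type} [AddCommGroup A] (g : A →+ A) (l : List (A →+ A))
    (h : ∀ a ∈ l, ∀ x, g (a x) = a (g x)) (x : A) :
    g (compList l x) = compList l (g x) := by
  induction l with
  | nil => rfl
  | cons a l ih =>
    simp only [List.forall_mem_cons] at h
    change g (a (compList l x)) = a (compList l (g x))
    rw [h.1, ih h.2]

/-- A factor that commutes with all the others may be moved to the right end of a product, so the
product kills whatever that factor kills. -/
theorem compList_eq_zero {A : Type} [AddCommGroup A] (g : A →+ A) (l : List (A →+ A))
    (hg : g ∈ l) (h : ∀ a ∈ l, ∀ x, g (a x) = a (g x)) (y : A) (hy : g y = 0) :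
    compList l y = 0 := by
  induction l with
  | nil => simp at hg
  | cons a l ih =>
    simp only [List.forall_mem_cons] at h
    change a (compList l y) = 0
    rcases List.mem_cons.1 hg with rfl | hg
    · rw [compList_comm g l h.2, hy, map_zero]
    · rw [ih hg h.2, map_zero]

theorem FIModule.JOp_apply (V : FIModule) (T : Finset ℤ) (i j : ↥T) (x : V.obj T) :
    V.JOp T i j x = x - V.map (Equiv.swap i j).toEmbedding x := rfl

theorem FIModule.JOp_comm (V : FIModule) (T : Finset ℤ) (i j i' j' : ↥T)
    (h₁ : i ≠ i') (h₂ : i ≠ j') (h₃ : j ≠ i') (h₄ : j ≠ j') (x : V.obj T) :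
    V.JOp T i j (V.JOp T i' j' x) = V.JOp T i' j' (V.JOp T i j x) := by
  have key : V.map (Equiv.swap i j).toEmbedding (V.map (Equiv.swap i' j').toEmbedding x) =
      V.map (Equiv.swap i' j').toEmbedding (V.map (Equiv.swap i j).toEmbedding x) := by
    rw [← AddMonoidHom.comp_apply, ← AddMonoidHom.comp_apply, ← V.map_comp, ← V.map_comp]
    congr 2
    ext1 t
    change Equiv.swap i j (Equiv.swap i' j' t) = Equiv.swap i' j' (Equiv.swap i j t)
    simp only [Equiv.swap_apply_def]
    grind
  simp only [JOp_apply, map_sub, key]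
  abel

theorem FIModule.JOp_map_eq_zero (V : FIModule) {S T : Finset ℤ} (f : ↥S ↪ ↥T) (i j : ↥T)
    (hi : ∀ s, f s ≠ i) (hj : ∀ s, f s ≠ j) (v : V.obj S) :
    V.JOp T i j (V.map f v) = 0 := by
  have key : f.trans (Equiv.swap i j).toEmbedding = f := by
    ext1 s
    exact Equiv.swap_apply_of_ne_of_ne (hi s) (hj s)
  rw [JOp_apply, ← AddMonoidHom.comp_apply, ← V.map_comp, key, sub_self]

/-- Pigeonhole: `k + 1` disjoint pairs cannot all meet the image of a set of size at most `k`. -/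
theorem exists_pair_avoiding {S T : Finset ℤ} {k : ℕ} (f : ↥S ↪ ↥T) (hS : S.card ≤ k)
    (ii jj : Fin (k + 1) → ↥T) (hinj : Function.Injective (Sum.elim ii jj)) :
    ∃ s, (∀ t, f t ≠ ii s) ∧ (∀ t, f t ≠ jj s) := by
  by_contra! hcon
  have hex : ∀ s, ∃ t, f t = ii s ∨ f t = jj s := by
    intro s
    by_cases h : ∀ t, f t ≠ ii s
    · obtain ⟨t, ht⟩ := hcon s h
      exact ⟨t, Or.inr ht⟩
    · push Not at h
      obtain ⟨t, ht⟩ := h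
      exact ⟨t, Or.inl ht⟩
  choose c hc using hex
  have hc_inj : Function.Injective c := by
    intro s s' hss
    have h' := hc s'
    rw [← hss] at h'
    rcases hc s with h | h <;> rcases h' with h' | h'
    · simpa using @hinj (Sum.inl s) (Sum.inl s') (h.symm.trans h')
    · simpa using @hinj (Sum.inl s) (Sum.inr s') (h.symm.trans h')
    · simpa using @hinj (Sum.inr s) (Sum.inl s') (h.symm.trans h')
    · simpa using @hinj (Sum.inr s) (Sum.inr s') (h.symm.trans h')
  have hcard := Fintype.card_le_of_injective c hc_inj
  simp only [Fintype.card_fin, Fintype.card_coe] at hcard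
  omega

/-- **Proposition 3.1** (Church–Ellenberg). If `M` is an FI-module generated in degree
≤ k, then `I_{k+1} · M_n = 0` for all `n ≥ 0`. -/
theorem FIModule.annIdeal_of_genLE (M : FIModule) (k : ℕ) (hMgen : M.GenLE k) :
    M.AnnIdeal (k + 1) := by
  intro n ii jj hinj
  ext x
  rw [AddMonoidHom.zero_apply]
  induction hMgen _ x using AddSubgroup.closure_induction with
  | zero => exact map_zero _
  | add a b _ _ ha hb => rw [map_add, ha, hb, add_zero]
  | neg a _ ha => rw [map_neg, ha, neg_zero]
  | mem y hy =>
    obtain ⟨S, f, v, hS, rfl⟩ := hy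
    obtain ⟨s, hi, hj⟩ := exists_pair_avoiding f hS ii jj hinj
    refine compList_eq_zero (M.JOp _ (ii s) (jj s)) _ (List.mem_ofFn.2 ⟨s, rfl⟩) ?_ _
      (M.JOp_map_eq_zero f _ _ hi hj v)
    intro a ha x
    obtain ⟨s', rfl⟩ := List.mem_ofFn.1 ha
    by_cases hss : s = s'
    · rw [hss]
    · exact M.JOp_comm _ _ _ _ _
        (fun h => hss (by simpa using @hinj (Sum.inl s) (Sum.inl s') h))
        (fun h => by simpa using @hinj (Sum.inl s) (Sum.inr s') h)
        (fun h => by simpa using @hinj (Sum.inr s) (Sum.inl s') h)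
        (fun h => hss (by simpa using @hinj (Sum.inr s) (Sum.inr s') h)) x
end

section
/- Fix d and n, and let F be the free abelian group on the set of injections f : [d] → [n], with S_n acting by postcomposition. Let F^b ⊆ F be the subgroup spanned by those injections f such that no S ∈ Σ(b) satisfies S ⊆ im f. If n ≥ b + d, then F = I_b·F + F^b. -/
/-!
The proof is a straightening argument. Give an injection `f` the weight `∑ x, f x`, which is
bounded above. If some `S = {s₀ < … < s_{b-1}}` in `Σ(b)` lies in the image of `f`, then, since
`n ≥ b + d`, there are `b` elements `t₀ < … < t_{b-1}` of `[n]` outside the image. The bound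
`s_i ≤ 2i + 1` forces `s_i < t_i` (`lt_of_ballot`): otherwise `s₀, …, s_i, t₀, …, t_i` would be
`2i + 2` distinct elements of `[2i + 1]`. Expanding `J^{s₀}_{t₀} ⋯ J^{s_{b-1}}_{t_{b-1}} f` gives
`f` plus signed injections obtained from `f` by replacing some of the values `s_i` by the larger
values `t_i`, all of larger weight (`compList_sub_mem`). Hence, modulo `I_b · F`, every injection
is either in `F^b` or a combination of injections of larger weight, and descending induction on
the weight concludes.
-/


/-- `Σ(b)`: the set of `b`-element subsets `S ⊆ [2b] = {1,…,2b}` whose `i`-th smallest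
element is at most `2i − 1` for each `1 ≤ i ≤ b` (written 0-indexed below: the
`(i+1)`-st smallest element is at most `2(i+1) − 1 = 2i + 1`). -/
def SigmaSet (b : ℕ) : Set (Finset ℕ) :=
  {S | S ⊆ Finset.Icc 1 (2 * b) ∧ ∃ h : S.card = b,
    ∀ i : Fin b, ((S.orderIsoOfFin h i : ℕ)) ≤ 2 * (i : ℕ) + 1}

/-- The permutation `ℤ[S_n]`-module `F = ℤ[Inj([d],[n])]`: the free abelian group on
the injections `[d] ↪ [n]`, with `σ · f = σ ∘ f`. -/
abbrev FInj (d n : ℕ) : Type :=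
  FreeAbelianGroup (↥(Finset.Icc 1 d) ↪ ↥(Finset.Icc 1 n))

/-- The action of a permutation `σ ∈ S_n` on `F` by postcomposition. -/
def permAct (d n : ℕ) (σ : Equiv.Perm ↥(Finset.Icc 1 n)) : FInj d n →+ FInj d n :=
  FreeAbelianGroup.map (fun f => f.trans σ.toEmbedding)

/-- The operator `J^i_j = id − (i j)` acting on `F`. -/
def JopF (d n : ℕ) (i j : ↥(Finset.Icc 1 n)) : FInj d n →+ FInj d n :=
  AddMonoidHom.id _ - permAct d n (Equiv.swap i j)

/-- The subgroup `I_b · F`, where `I_b ⊆ ℤ[S_n]` is the two-sided ideal generated by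
the products `J^{i₁}_{j₁} ⋯ J^{i_b}_{j_b}` with `2b` pairwise distinct indices.
Since the generating set of `I_b` is stable under conjugation and group elements act
invertibly, `I_b · F` is spanned by the values of these generating operators. -/
def IbF (d n b : ℕ) : AddSubgroup (FInj d n) :=
  AddSubgroup.closure {y | ∃ ii jj : Fin b → ↥(Finset.Icc 1 n),
    Function.Injective (Sum.elim ii jj) ∧
    ∃ x : FInj d n, y = compList (List.ofFn fun s : Fin b => JopF d n (ii s) (jj s)) x}

/-- The image of an injection `f : [d] ↪ [n]` as a subset of `ℕ`. -/
def imSet {d n : ℕ} (f : ↥(Finset.Icc 1 d) ↪ ↥(Finset.Icc 1 n)) : Finset ℕ :=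
  Finset.image (fun x => (f x : ℕ)) Finset.univ

/-- The subgroup `F^b ⊆ F` spanned by the injections `f` whose image contains no
element of `Σ(b)`. -/
def Fb (d n b : ℕ) : AddSubgroup (FInj d n) :=
  AddSubgroup.closure {y | ∃ f : ↥(Finset.Icc 1 d) ↪ ↥(Finset.Icc 1 n),
    (∀ S ∈ SigmaSet b, ¬ S ⊆ imSet f) ∧ y = FreeAbelianGroup.of f}

/-- The sum of the values of an injection. -/
def weight {d n : ℕ} (f : ↥(Finset.Icc 1 d) ↪ ↥(Finset.Icc 1 n)) : ℕ :=
  ∑ x, (f x : ℕ)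

lemma weight_le {d n : ℕ} (f : ↥(Finset.Icc 1 d) ↪ ↥(Finset.Icc 1 n)) :
    weight f ≤ d * n := by
  have h : ∀ x ∈ (Finset.univ : Finset ↥(Finset.Icc 1 d)), (f x : ℕ) ≤ n := fun x _ =>
    (Finset.mem_Icc.mp (f x).2).2
  simpa [weight] using Finset.sum_le_card_nsmul _ _ _ h

lemma weight_lt_swap {d n : ℕ} (f : ↥(Finset.Icc 1 d) ↪ ↥(Finset.Icc 1 n))
    {s t : ↥(Finset.Icc 1 n)} (hst : s < t) (hs : ∃ x, f x = s) (ht : ∀ x, f x ≠ t) :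
    weight f < weight (f.trans (Equiv.swap s t).toEmbedding) := by
  obtain ⟨x₀, hx₀⟩ := hs
  refine Finset.sum_lt_sum (fun x _ => ?_) ⟨x₀, Finset.mem_univ _, ?_⟩
  · by_cases hx : f x = s
    · simpa [hx] using hst.le
    · simp [Equiv.swap_apply_of_ne_of_ne hx (ht x)]
  · simpa [hx₀] using hst

/-- The injections heavier than `f` that take the same values as `f` at the same places, apart
from the values occurring in the pairs of `L`. -/
def heavier {d n : ℕ} (L : List (↥(Finset.Icc 1 n) × ↥(Finset.Icc 1 n)))
    (f : ↥(Finset.Icc 1 d) ↪ ↥(Finset.Icc 1 n)) :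
    Set (↥(Finset.Icc 1 d) ↪ ↥(Finset.Icc 1 n)) :=
  {g | weight f < weight g ∧ ∀ y, (∀ p ∈ L, p.1 ≠ y ∧ p.2 ≠ y) → ∀ x, f x = y ↔ g x = y}

/-- A product of operators `J^s_t`, with the `s` in the image of `f`, the `t` outside it and
`s < t` throughout, sends `f` to itself plus a combination of heavier injections. Controlling
the values that do not occur in `L` makes the induction work: a further pair `(s, t)` is in the
same position with respect to each heavier injection as with respect to `f`. -/
lemma compList_sub_mem {d n : ℕ} (f : ↥(Finset.Icc 1 d) ↪ ↥(Finset.Icc 1 n))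
    (L : List (↥(Finset.Icc 1 n) × ↥(Finset.Icc 1 n)))
    (hL : ∀ p ∈ L, p.1 < p.2 ∧ (∃ x, f x = p.1) ∧ ∀ x, f x ≠ p.2)
    (hp : L.Pairwise fun p q => p.1 ≠ q.1 ∧ p.2 ≠ q.2) :
    compList (L.map fun p => JopF d n p.1 p.2) (FreeAbelianGroup.of f) - FreeAbelianGroup.of f ∈
      AddSubgroup.closure (FreeAbelianGroup.of '' heavier L f) := by
  induction L with
  | nil => simp [compList]
  | cons p L ih =>
    obtain ⟨s, t⟩ := p
    rw [List.pairwise_cons] at hp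
    obtain ⟨hst, ⟨x₀, hx₀⟩, ht⟩ := hL (s, t) List.mem_cons_self
    have hL' := fun p hp => hL p (List.mem_cons_of_mem _ hp)
    have ih := ih hL' hp.2
    simp only at hst hx₀ ht
    have hsL : ∀ p ∈ L, p.1 ≠ s ∧ p.2 ≠ s := fun p hpL =>
      ⟨((hp.1 p hpL).1).symm, fun h => (hL' p hpL).2.2 x₀ (hx₀.trans h.symm)⟩
    have htL : ∀ p ∈ L, p.1 ≠ t ∧ p.2 ≠ t := fun p hpL =>
      ⟨fun h => by
        obtain ⟨x, hx⟩ := (hL' p hpL).2.1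
        exact ht x (hx.trans h), ((hp.1 p hpL).2).symm⟩
    set v := compList (L.map fun p => JopF d n p.1 p.2) (FreeAbelianGroup.of f) with hv
    set u := v - FreeAbelianGroup.of f with hu
    have hvu : v = u + FreeAbelianGroup.of f := by rw [hu]; abel
    set σ := permAct d n (Equiv.swap s t) with hσ
    have hof : ∀ g : ↥(Finset.Icc 1 d) ↪ ↥(Finset.Icc 1 n), σ (FreeAbelianGroup.of g) =
        FreeAbelianGroup.of (g.trans (Equiv.swap s t).toEmbedding) := fun g => by
      simp [hσ, permAct]
    have hfσ : f.trans (Equiv.swap s t).toEmbedding ∈ heavier ((s, t) :: L) f := by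
      refine ⟨weight_lt_swap f hst ⟨x₀, hx₀⟩ ht, fun y hy x => ?_⟩
      have h1 := hy (s, t) List.mem_cons_self
      simp only [Function.Embedding.trans_apply, Equiv.coe_toEmbedding, Equiv.swap_apply_eq_iff,
        Equiv.swap_apply_of_ne_of_ne h1.1.symm h1.2.symm]
    have hmono : heavier L f ⊆ heavier ((s, t) :: L) f := fun g hg =>
      ⟨hg.1, fun y hy => hg.2 y fun p hpL => hy p (List.mem_cons_of_mem _ hpL)⟩
    have hgσ : ∀ g ∈ heavier L f,
        g.trans (Equiv.swap s t).toEmbedding ∈ heavier ((s, t) :: L) f := fun g hg => by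
      have hw := weight_lt_swap g hst ⟨x₀, (hg.2 s hsL x₀).1 hx₀⟩
        fun x hx => ht x ((hg.2 t htL x).2 hx)
      refine ⟨hg.1.trans hw, fun y hy x => ?_⟩
      have h1 := hy (s, t) List.mem_cons_self
      simp only [Function.Embedding.trans_apply, Equiv.coe_toEmbedding, Equiv.swap_apply_eq_iff,
        Equiv.swap_apply_of_ne_of_ne h1.1.symm h1.2.symm]
      exact (hmono hg).2 y hy x
    have hu1 : u ∈ AddSubgroup.closure (FreeAbelianGroup.of '' heavier ((s, t) :: L) f) :=
      AddSubgroup.closure_mono (Set.image_mono hmono) ih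
    have hu2 : σ u ∈ AddSubgroup.closure (FreeAbelianGroup.of '' heavier ((s, t) :: L) f) := by
      have h2 : AddSubgroup.closure (FreeAbelianGroup.of '' heavier L f) ≤
          (AddSubgroup.closure (FreeAbelianGroup.of '' heavier ((s, t) :: L) f)).comap σ := by
        rw [AddSubgroup.closure_le]
        rintro _ ⟨g, hg, rfl⟩
        rw [SetLike.mem_coe, AddSubgroup.mem_comap, hof]
        exact AddSubgroup.subset_closure ⟨_, hgσ g hg, rfl⟩
      exact h2 ih
    have hf2 : σ (FreeAbelianGroup.of f) ∈
        AddSubgroup.closure (FreeAbelianGroup.of '' heavier ((s, t) :: L) f) := by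
      rw [hof]
      exact AddSubgroup.subset_closure ⟨_, hfσ, rfl⟩
    have hfinal : compList (((s, t) :: L).map fun p => JopF d n p.1 p.2) (FreeAbelianGroup.of f)
        - FreeAbelianGroup.of f = u - σ u - σ (FreeAbelianGroup.of f) := by
      have h3 : compList (((s, t) :: L).map fun p => JopF d n p.1 p.2) (FreeAbelianGroup.of f)
          = v - σ v := rfl
      rw [h3, hvu, map_add]
      abel
    rw [hfinal]
    exact sub_mem (sub_mem hu1 hu2) hf2

lemma lt_of_ballot {b : ℕ} {s t : Fin b → ℕ} (hs : StrictMono s) (ht : StrictMono t)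
    (hs1 : ∀ i, 1 ≤ s i) (ht1 : ∀ i, 1 ≤ t i) (hst : ∀ i j, s i ≠ t j)
    (hb : ∀ i : Fin b, s i ≤ 2 * (i : ℕ) + 1) (i : Fin b) : s i < t i := by
  by_contra! hlt
  have hsub : (Finset.Iic i).image s ∪ (Finset.Iic i).image t ⊆
      Finset.Icc 1 (2 * (i : ℕ) + 1) := by
    intro y hy
    simp only [Finset.mem_union, Finset.mem_image, Finset.mem_Iic] at hy
    rw [Finset.mem_Icc]
    rcases hy with ⟨j, hj, rfl⟩ | ⟨j, hj, rfl⟩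
    · exact ⟨hs1 j, (hs.monotone hj).trans (hb i)⟩
    · exact ⟨ht1 j, (ht.monotone hj).trans (hlt.trans (hb i))⟩
  have hdisj : Disjoint ((Finset.Iic i).image s) ((Finset.Iic i).image t) := by
    rw [Finset.disjoint_left]
    intro y hy hy'
    obtain ⟨j, -, rfl⟩ := Finset.mem_image.mp hy
    obtain ⟨k, -, hk⟩ := Finset.mem_image.mp hy'
    exact hst j k hk.symm
  have hc := Finset.card_le_card hsub
  rw [Finset.card_union_of_disjoint hdisj, Finset.card_image_of_injective _ hs.injective,
    Finset.card_image_of_injective _ ht.injective, Fin.card_Iic, Nat.card_Icc] at hc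
  omega

/-- The straightening step: modulo `I_b · F`, an injection whose image contains an element of
`Σ(b)` is a combination of heavier injections. -/
lemma exists_sub_mem {d n b : ℕ} (h : n ≥ b + d)
    (f : ↥(Finset.Icc 1 d) ↪ ↥(Finset.Icc 1 n)) {S : Finset ℕ} (hS : S ∈ SigmaSet b)
    (hSf : S ⊆ imSet f) :
    ∃ y ∈ IbF d n b, y - FreeAbelianGroup.of f ∈
      AddSubgroup.closure (FreeAbelianGroup.of '' {g | weight f < weight g}) := by
  obtain ⟨-, hcard, hb⟩ := hS
  have hx : ∀ i : Fin b, ∃ x, (f x : ℕ) = S.orderIsoOfFin hcard i := fun i => by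
    simpa [imSet] using hSf (S.orderIsoOfFin hcard i).2
  choose x hx using hx
  have hC : b ≤ (Finset.univ \ Finset.univ.map f).card := by
    have h1 := Finset.le_card_sdiff (Finset.univ.map f) (Finset.univ : Finset ↥(Finset.Icc 1 n))
    simp only [Finset.card_map, Finset.card_univ, Fintype.card_coe, Nat.card_Icc] at h1
    omega
  obtain ⟨C, hCsub, hCcard⟩ := Finset.exists_subset_card_eq hC
  let t : Fin b → ↥(Finset.Icc 1 n) := fun i => C.orderEmbOfFin hCcard i
  have htmono : StrictMono t := (C.orderEmbOfFin hCcard).strictMono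
  have htf : ∀ i y, f y ≠ t i := fun i y hy => by
    have h1 := hCsub (C.orderEmbOfFin_mem hCcard i)
    rw [Finset.mem_sdiff] at h1
    exact h1.2 (Finset.mem_map.mpr ⟨y, Finset.mem_univ _, hy⟩)
  let s : Fin b → ↥(Finset.Icc 1 n) := fun i => f (x i)
  have hsmono : StrictMono s := fun i j hij => by
    change (f (x i) : ℕ) < f (x j)
    rw [hx, hx]
    exact (S.orderIsoOfFin hcard).strictMono hij
  have hlt : ∀ i, s i < t i := fun i =>
    lt_of_ballot (s := fun i => (s i : ℕ)) (t := fun i => (t i : ℕ)) hsmono htmono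
      (fun i => (Finset.mem_Icc.mp (s i).2).1) (fun i => (Finset.mem_Icc.mp (t i).2).1)
      (fun i j hij => htf j (x i) (Subtype.ext hij))
      (fun i => (hx i).trans_le (hb i)) i
  have key := compList_sub_mem f (List.ofFn fun i => (s i, t i)) (by
    intro p hp
    obtain ⟨i, rfl⟩ := (List.mem_ofFn' _ _).mp hp
    exact ⟨hlt i, ⟨x i, rfl⟩, htf i⟩) (by
    rw [List.pairwise_ofFn]
    intro i j hij
    exact ⟨hsmono.injective.ne hij.ne, htmono.injective.ne hij.ne⟩)
  rw [List.map_ofFn] at key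
  refine ⟨_, AddSubgroup.subset_closure ⟨s, t, ?_, FreeAbelianGroup.of f, rfl⟩,
    AddSubgroup.closure_mono (Set.image_mono fun g hg => hg.1) key⟩
  exact hsmono.injective.sumElim htmono.injective fun i j => htf j (x i)

/-- **Proposition 3.7** (Church–Ellenberg). If `n ≥ b + d` then `F = I_b·F + F^b`. -/
theorem F_eq_IbF_sup_Fb (d n b : ℕ) (h : n ≥ b + d) :
    IbF d n b ⊔ Fb d n b = (⊤ : AddSubgroup (FInj d n)) := by
  have main : ∀ k : ℕ, ∀ f : ↥(Finset.Icc 1 d) ↪ ↥(Finset.Icc 1 n), d * n - weight f = k →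
      FreeAbelianGroup.of f ∈ IbF d n b ⊔ Fb d n b := by
    intro k
    induction k using Nat.strong_induction_on with
    | _ k ih =>
      intro f hk
      by_cases hf : ∀ S ∈ SigmaSet b, ¬ S ⊆ imSet f
      · exact AddSubgroup.mem_sup_right (AddSubgroup.subset_closure ⟨f, hf, rfl⟩)
      · push Not at hf
        obtain ⟨S, hS, hSf⟩ := hf
        obtain ⟨y, hy, hyf⟩ := exists_sub_mem h f hS hSf
        have hle : AddSubgroup.closure (FreeAbelianGroup.of '' {g | weight f < weight g}) ≤
            IbF d n b ⊔ Fb d n b := by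
          rw [AddSubgroup.closure_le]
          rintro _ ⟨g, hg, rfl⟩
          have hg : weight f < weight g := hg
          have := weight_le g
          exact ih _ (by omega) g rfl
        have := sub_mem (AddSubgroup.mem_sup_left hy) (hle hyf)
        rwa [sub_sub_cancel] at this
  rw [eq_top_iff]
  intro v _
  induction v using FreeAbelianGroup.induction_on with
  | zero => exact zero_mem _
  | of f => exact main _ f rfl
  | neg f hf => exact neg_mem (main _ f rfl)
  | add u v hu hv => exact add_mem (hu trivial) (hv trivial)
end
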